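/- arXiv:2508.02224 — 6 statements merged into one kernel-verified Lean document; each statement's English description precedes it below -/
import Mathlib

section
/- Let (Π,c) be a semimetric space satisfying Hypothesis (C). Then there exist a metric d on Π and θ ∈ (0,1] such that d(x,y) ≤ c(x,y)^θ ≤ 2·d(x,y) for all x,y ∈ Π; consequently (Π,d) is a complete, separable, locally compact metric space, and a sequence converges in the metric d if and only if it c-converges (the topology induced by d coincides with the semimetric topology of c). -/
open MeasureTheory Filter Topology ENNReal

namespace PoC

variable {X : Type*}

/-- Convergence of a sequence with respect to the semimetric `c`
    (`x_n →c x` means `c (x_n, x) → 0`). -/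
def CConv (c : X → X → ℝ) (u : ℕ → X) (l : X) : Prop :=
  Filter.Tendsto (fun n => c (u n) l) Filter.atTop (nhds 0)

/-- `c` is a semimetric: nonnegative, vanishing exactly on the diagonal, symmetric. -/
structure IsSemimetric (c : X → X → ℝ) : Prop where
  nonneg : ∀ x y, 0 ≤ c x y
  eq_zero_iff : ∀ x y, c x y = 0 ↔ x = y
  symm : ∀ x y, c x y = c y x

/-- Hypothesis (C) for the semimetric space `(X, c)`, with relaxed triangle constant `B`:
(C1) completeness and separability, (C2) `B`-relaxed triangle inequality,
(C3) joint sequential continuity of `c`, (C4) (sequential) local compactness. -/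
structure HypC (c : X → X → ℝ) (B : ℝ) : Prop where
  semimetric : IsSemimetric c
  one_le : 1 ≤ B
  relaxed : ∀ x y z, c x y ≤ B * (c x z + c z y)
  complete : ∀ u : ℕ → X,
    (∀ ε > (0 : ℝ), ∃ N : ℕ, ∀ m ≥ N, ∀ n ≥ N, c (u m) (u n) < ε) → ∃ l, CConv c u l
  separable : ∃ D : Set X, D.Countable ∧ ∀ x : X, ∀ ε > (0 : ℝ), ∃ y ∈ D, c x y < ε
  contC : ∀ (u v : ℕ → X) (a b : X), CConv c u a → CConv c v b →
    Filter.Tendsto (fun n => c (u n) (v n)) Filter.atTop (nhds (c a b))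
  locallyCompact : ∀ x : X, ∃ r > (0 : ℝ), ∀ u : ℕ → X, (∀ n, c x (u n) ≤ r) →
    ∃ l : X, ∃ φ : ℕ → ℕ, StrictMono φ ∧ CConv c (u ∘ φ) l

end PoC

namespace PoC

/-- A relaxed triangle inequality with constant `B` gives a four-point inequality with constant
`3 * B ^ 2`. -/
theorem four_point_of_relaxed {X : Type*} {c : X → X → ℝ} {B : ℝ} (hB : 1 ≤ B)
    (hc : IsSemimetric c) (hr : ∀ x y z, c x y ≤ B * (c x z + c z y)) (x y z w : X) :
    c x w ≤ 3 * B ^ 2 * max (c x y) (max (c y z) (c z w)) := by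
  set M := max (c x y) (max (c y z) (c z w))
  have h1 : c x y ≤ M := le_max_left _ _
  have h2 : c y z ≤ M := (le_max_left _ _).trans (le_max_right _ _)
  have h3 : c z w ≤ M := (le_max_right _ _).trans (le_max_right _ _)
  have hM : 0 ≤ M := (hc.nonneg x y).trans h1
  have h4 : c y w ≤ B * (M + M) := (hr y w z).trans (by gcongr)
  calc c x w ≤ B * (M + B * (M + M)) := (hr x w y).trans (by gcongr)
    _ ≤ 3 * B ^ 2 * M := by
      nlinarith [mul_nonneg (mul_nonneg (zero_le_one.trans hB) (sub_nonneg.2 hB)) hM]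

/-- **Frink's metrization lemma**: a power of a semimetric with a four-point inequality is
equivalent, up to a factor `2`, to a metric. -/
theorem IsSemimetric.exists_metric_of_four_point {X : Type*} {c : X → X → ℝ}
    (hc : IsSemimetric c) {K θ : ℝ} (hθ : 0 < θ) (hK : 0 ≤ K) (hKθ : K ^ θ = 2)
    (h4 : ∀ x y z w, c x w ≤ K * max (c x y) (max (c y z) (c z w))) :
    ∃ d : X → X → ℝ, IsSemimetric d ∧ (∀ x y z, d x z ≤ d x y + d y z) ∧
      ∀ x y, d x y ≤ c x y ^ θ ∧ c x y ^ θ ≤ 2 * d x y := by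
  let e : X → X → NNReal := fun x y => ⟨c x y ^ θ, Real.rpow_nonneg (hc.nonneg x y) θ⟩
  have e_self : ∀ x, e x x = 0 := fun x => NNReal.eq <| by
    change c x x ^ θ = 0
    rw [(hc.eq_zero_iff x x).2 rfl, Real.zero_rpow hθ.ne']
  have e_comm : ∀ x y, e x y = e y x := fun x y => NNReal.eq <| by
    change c x y ^ θ = c y x ^ θ
    rw [hc.symm]
  have he : ∀ x y z w, e x w ≤ 2 * max (e x y) (max (e y z) (e z w)) := by
    intro x y z w
    rw [← NNReal.coe_le_coe]
    push_cast
    change c x w ^ θ ≤ 2 * max (c x y ^ θ) (max (c y z ^ θ) (c z w ^ θ))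
    have hmono := Real.monotoneOn_rpow_Ici_of_exponent_nonneg hθ.le
    have hxy := hc.nonneg x y
    have hyz := hc.nonneg y z
    have hzw := hc.nonneg z w
    rw [← hmono.map_max hyz hzw, ← hmono.map_max hxy (le_max_of_le_left hyz), ← hKθ,
      ← Real.mul_rpow hK (le_max_of_le_left hxy)]
    exact Real.rpow_le_rpow (hc.nonneg x w) (h4 x y z w) hθ.le
  let := PseudoMetricSpace.ofPreNNDist e e_self e_comm
  have hle : ∀ x y : X, dist x y ≤ c x y ^ θ :=
    PseudoMetricSpace.dist_ofPreNNDist_le e e_self e_comm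
  have hge : ∀ x y : X, c x y ^ θ ≤ 2 * dist x y :=
    PseudoMetricSpace.le_two_mul_dist_ofPreNNDist e e_self e_comm he
  refine ⟨dist, ⟨fun _ _ => dist_nonneg, fun x y => ⟨fun h => ?_, ?_⟩, dist_comm⟩,
    dist_triangle, fun x y => ⟨hle x y, hge x y⟩⟩
  · have h0 := hge x y
    rw [h, mul_zero] at h0
    exact (hc.eq_zero_iff x y).1 ((Real.rpow_eq_zero (hc.nonneg x y) hθ.ne').1
      (h0.antisymm (Real.rpow_nonneg (hc.nonneg x y) θ)))
  · rintro rfl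
    exact dist_self x

/-- If `(X, c)` satisfies Hypothesis (C), then there are a metric `d` on `X`
and `θ ∈ (0,1]` with `d(x,y) ≤ c(x,y)^θ ≤ 2 d(x,y)`; consequently `(X, d)` is a complete,
separable, locally compact metric space and `d`-convergence coincides with `c`-convergence. -/
theorem statement0 {X : Type*} {c : X → X → ℝ} {B : ℝ} (hC : HypC c B) :
    ∃ (d : X → X → ℝ) (θ : ℝ), 0 < θ ∧ θ ≤ 1 ∧
      -- `d` is a metric:
      IsSemimetric d ∧ (∀ x y z : X, d x z ≤ d x y + d y z) ∧
      -- the sandwich `d ≤ c^θ ≤ 2 d`: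
      (∀ x y : X, d x y ≤ (c x y) ^ θ ∧ (c x y) ^ θ ≤ 2 * d x y) ∧
      -- `(X, d)` is complete:
      (∀ u : ℕ → X, (∀ ε > (0 : ℝ), ∃ N : ℕ, ∀ m ≥ N, ∀ n ≥ N, d (u m) (u n) < ε) →
        ∃ l : X, Filter.Tendsto (fun n => d (u n) l) Filter.atTop (nhds 0)) ∧
      -- `(X, d)` is separable:
      (∃ D : Set X, D.Countable ∧ ∀ x : X, ∀ ε > (0 : ℝ), ∃ y ∈ D, d x y < ε) ∧
      -- `(X, d)` is locally compact:
      (∀ x : X, ∃ r > (0 : ℝ), ∀ u : ℕ → X, (∀ n, d x (u n) ≤ r) →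
        ∃ l : X, ∃ φ : ℕ → ℕ, StrictMono φ ∧
          Filter.Tendsto (fun n => d (u (φ n)) l) Filter.atTop (nhds 0)) ∧
      -- the topologies coincide: a sequence `d`-converges iff it `c`-converges:
      (∀ (u : ℕ → X) (l : X),
        Filter.Tendsto (fun n => d (u n) l) Filter.atTop (nhds 0) ↔ CConv c u l) := by
  have hc := hC.semimetric
  have hB := hC.one_le
  have hK : (3 : ℝ) ≤ 3 * B ^ 2 := by nlinarith
  have hlog2 : 0 < Real.log 2 := Real.log_pos one_lt_two
  have hlog : Real.log 2 ≤ Real.log (3 * B ^ 2) := Real.log_le_log two_pos (by linarith)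
  obtain ⟨θ, hθ, hθ1, hKθ⟩ : ∃ θ : ℝ, 0 < θ ∧ θ ≤ 1 ∧ (3 * B ^ 2) ^ θ = 2 := by
    refine ⟨Real.log 2 / Real.log (3 * B ^ 2), div_pos hlog2 (hlog2.trans_le hlog),
      div_le_one_of_le₀ hlog (hlog2.trans_le hlog).le, ?_⟩
    rw [Real.rpow_def_of_pos (by linarith), mul_div_cancel₀ _ (hlog2.trans_le hlog).ne',
      Real.exp_log two_pos]
  obtain ⟨d, hd, htri, hdc⟩ := hc.exists_metric_of_four_point hθ (by linarith) hKθ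
    (four_point_of_relaxed hB hc hC.relaxed)
  have hconv : ∀ (u : ℕ → X) (l : X),
      Tendsto (fun n => d (u n) l) atTop (𝓝 0) ↔ CConv c u l := by
    intro u l
    constructor <;> intro h
    · have hpow : Tendsto (fun n => c (u n) l ^ θ) atTop (𝓝 0) :=
        squeeze_zero (fun n => Real.rpow_nonneg (hc.nonneg _ _) θ) (fun n => (hdc _ _).2)
          (by simpa using h.const_mul 2)
      have hroot := hpow.rpow_const (p := θ⁻¹) (Or.inr (inv_nonneg.2 hθ.le))
      simpa only [CConv, Real.rpow_rpow_inv (hc.nonneg _ _) hθ.ne',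
        Real.zero_rpow (inv_ne_zero hθ.ne')] using hroot
    · have hpow := Tendsto.rpow_const (p := θ) h (Or.inr hθ.le)
      rw [Real.zero_rpow hθ.ne'] at hpow
      exact squeeze_zero (fun n => hd.nonneg _ _) (fun n => (hdc _ _).1) hpow
  refine ⟨d, θ, hθ, hθ1, hd, htri, hdc, ?_, ?_, ?_, hconv⟩
  · intro u hu
    obtain ⟨l, hl⟩ := hC.complete u fun ε hε => by
      obtain ⟨N, hN⟩ := hu (ε ^ θ / 2) (half_pos (Real.rpow_pos_of_pos hε θ))
      refine ⟨N, fun m hm n hn => ?_⟩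
      rw [← Real.rpow_lt_rpow_iff (hc.nonneg _ _) hε.le hθ]
      linarith [hN m hm n hn, (hdc (u m) (u n)).2]
    exact ⟨l, (hconv u l).2 hl⟩
  · obtain ⟨D, hD, hdense⟩ := hC.separable
    refine ⟨D, hD, fun x ε hε => ?_⟩
    obtain ⟨y, hy, hxy⟩ := hdense x (ε ^ θ⁻¹) (Real.rpow_pos_of_pos hε _)
    refine ⟨y, hy, (hdc x y).1.trans_lt ?_⟩
    rw [← Real.rpow_inv_rpow hε.le hθ.ne']
    exact Real.rpow_lt_rpow (hc.nonneg _ _) hxy hθ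
  · intro x
    obtain ⟨r, hr, hcomp⟩ := hC.locallyCompact x
    refine ⟨r ^ θ / 2, half_pos (Real.rpow_pos_of_pos hr θ), fun u hu => ?_⟩
    obtain ⟨l, φ, hφ, hl⟩ := hcomp u fun n => by
      rw [← Real.rpow_le_rpow_iff (hc.nonneg _ _) hr.le hθ]
      linarith [hu n, (hdc x (u n)).2]
    exact ⟨l, φ, hφ, (hconv (u ∘ φ) l).2 hl⟩

end PoC
end

section
/- Let (Π,c) be a semimetric space satisfying Hypothesis (C), let K and L be Markov kernels on Π, let μ, ν be Borel probability measures on Π, and let γ ∈ Γ(μ,ν) be any coupling of μ and ν. Then C_c(μK, νL) ≤ ∫_{Π×Π} C_c(δ_x K, δ_y L) dγ(x,y), where δ_x K = K(x) denotes the measure assigned by the kernel K to the point x. -/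
open MeasureTheory Filter Topology ENNReal

namespace PoC

variable {X : Type*} [MeasurableSpace X]

/-- `γ` is a coupling of the probability measures `μ` and `ν`. -/
def IsCoupling (μ ν : Measure X) (γ : Measure (X × X)) : Prop :=
  IsProbabilityMeasure γ ∧ γ.map Prod.fst = μ ∧ γ.map Prod.snd = ν

/-- The `c`-optimal transport cost `C_c(μ,ν)`, valued in `ℝ≥0∞`. -/
noncomputable def cost (c : X → X → ℝ) (μ ν : Measure X) : ℝ≥0∞ :=
  ⨅ (γ : Measure (X × X)) (_ : IsCoupling μ ν γ), ∫⁻ p, ENNReal.ofReal (c p.1 p.2) ∂γ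

/-- `μ ∈ P_c(X)`: a Borel probability measure with finite `c`-moment. -/
def MemPc (c : X → X → ℝ) (μ : Measure X) : Prop :=
  IsProbabilityMeasure μ ∧ ∀ z : X, (∫⁻ x, ENNReal.ofReal (c z x) ∂μ) < ⊤

/-- Sequential continuity of a real function w.r.t. the semimetric `c`. -/
def SeqContinuous (c : X → X → ℝ) (φ : X → ℝ) : Prop :=
  ∀ (u : ℕ → X) (l : X), CConv c u l →
    Filter.Tendsto (fun n => φ (u n)) Filter.atTop (nhds (φ l))

/-- `φ ∈ C_{b,c}(X)`: continuous functions with growth controlled by `c`. -/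
def IsCbc (c : X → X → ℝ) (φ : X → ℝ) : Prop :=
  SeqContinuous c φ ∧
    ∃ M₀ M₁ : ℝ, 0 ≤ M₀ ∧ 0 ≤ M₁ ∧ ∃ z : X, ∀ x, |φ x| ≤ M₀ + M₁ * c z x

/-- Weak convergence of probability measures: convergence of integrals against all
bounded (`c`-sequentially) continuous functions. -/
def WeakConv (c : X → X → ℝ) (μs : ℕ → Measure X) (μ : Measure X) : Prop :=
  ∀ φ : X → ℝ, SeqContinuous c φ → (∃ M : ℝ, ∀ x, |φ x| ≤ M) →
    Filter.Tendsto (fun n => ∫ x, φ x ∂(μs n)) Filter.atTop (nhds (∫ x, φ x ∂μ))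

end PoC

namespace PoC

variable {X : Type*} [MeasurableSpace X]

/-- A (weakly continuous) Markov kernel on `X`. -/
def IsMarkovKernelW (c : X → X → ℝ) (K : X → Measure X) : Prop :=
  Measurable K ∧ (∀ x, IsProbabilityMeasure (K x)) ∧
  ∀ (u : ℕ → X) (l : X), CConv c u l → ∀ φ : X → ℝ, SeqContinuous c φ →
    (∃ M : ℝ, ∀ x, |φ x| ≤ M) →
    Filter.Tendsto (fun n => ∫ y, φ y ∂(K (u n))) Filter.atTop (nhds (∫ y, φ y ∂(K l)))

end PoC

namespace PoC

section OuterFull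

variable {Ω : Type*} [MeasurableSpace Ω] {γ : Measure Ω}

/-- `S` is not assumed measurable; it has full outer measure. -/
def OuterFull (γ : Measure Ω) (S : Set Ω) : Prop :=
  ∀ A, MeasurableSet A → S ⊆ A → γ Aᶜ = 0

lemma OuterFull.ae {S : Set Ω} (hS : OuterFull γ S) {p : Ω → Prop}
    (hp : MeasurableSet {ω | p ω}) (h : ∀ ω ∈ S, p ω) : ∀ᵐ ω ∂γ, p ω :=
  hS _ hp h

/-- On a set of full outer measure, every function to `ℕ` agrees with a measurable one. -/
lemma OuterFull.exists_measurable_eq [IsFiniteMeasure γ] {S : Set Ω} (hS : OuterFull γ S)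
    (N : Ω → ℕ) : ∃ n : Ω → ℕ, Measurable n ∧ OuterFull γ {ω | ω ∈ S ∧ N ω = n ω} := by
  classical
  let T : ℕ → Set Ω := fun k => {ω | ω ∈ S ∧ N ω = k}
  let G : ℕ → Set Ω := fun k => toMeasurable γ (T k)
  have hG : ∀ k, MeasurableSet (G k) := fun k => measurableSet_toMeasurable _ _
  have hex : ∀ ω, ∃ k, ω ∈ G k ∨ ω ∈ (⋃ i, G i)ᶜ := by
    intro ω
    by_cases h : ω ∈ ⋃ i, G i
    · obtain ⟨k, hk⟩ := Set.mem_iUnion.1 h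
      exact ⟨k, Or.inl hk⟩
    · exact ⟨0, Or.inr h⟩
  let n : Ω → ℕ := fun ω => Nat.find (hex ω)
  have hn : Measurable n :=
    measurable_find hex fun k => (hG k).union (MeasurableSet.iUnion hG).compl
  refine ⟨n, hn, fun A hA hsub => ?_⟩
  have hnull : γ (⋃ i, G i)ᶜ = 0 := by
    refine hS _ (MeasurableSet.iUnion hG) fun ω hω => Set.mem_iUnion.2 ⟨N ω, ?_⟩
    exact subset_toMeasurable _ _ ⟨hω, rfl⟩
  have hpiece : ∀ k, γ (G k ∩ (Aᶜ ∩ n ⁻¹' {k})) = 0 := by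
    intro k
    rw [Measure.measure_toMeasurable_inter_of_sFinite
      (hA.compl.inter (hn (measurableSet_singleton k)))]
    convert measure_empty (μ := γ)
    refine Set.eq_empty_of_forall_notMem ?_
    rintro ω ⟨⟨hωS, hωN⟩, hωA, hωn⟩
    exact hωA (hsub ⟨hωS, hωN.trans (by simpa using hωn.symm)⟩)
  refine measure_mono_null (t := (⋃ i, G i)ᶜ ∪ ⋃ k, G k ∩ (Aᶜ ∩ n ⁻¹' {k})) ?_
    (measure_union_null hnull (measure_iUnion_null hpiece))
  intro ω hω
  rcases Nat.find_spec (hex ω) with h | h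
  · exact Or.inr (Set.mem_iUnion.2 ⟨n ω, h, hω, rfl⟩)
  · exact Or.inl h

/-- Up to `ε`, an arbitrary function agrees with its best measurable minorant on a set of full
outer measure. -/
lemma exists_measurable_minorant (f : Ω → ℝ≥0∞) (hf : ∫⁻ ω, f ω ∂γ ≠ ⊤) {ε : ℝ≥0∞}
    (hε : ε ≠ 0) : ∃ g : Ω → ℝ≥0∞, Measurable g ∧ ∫⁻ ω, g ω ∂γ = ∫⁻ ω, f ω ∂γ ∧
      OuterFull γ {ω | f ω ≤ g ω + ε} := by
  obtain ⟨g, hg, hgf, hgeq⟩ := exists_measurable_le_lintegral_eq γ f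
  refine ⟨g, hg, hgeq.symm, fun A hA hsub => ?_⟩
  have hle : ∫⁻ ω, g ω ∂γ + ε * γ Aᶜ ≤ ∫⁻ ω, g ω ∂γ + 0 := by
    rw [← lintegral_indicator_const hA.compl, ← lintegral_add_left hg, add_zero, ← hgeq]
    refine lintegral_mono fun ω => ?_
    by_cases h : ω ∈ A
    · simpa [h] using hgf ω
    · have : g ω + ε ≤ f ω := (not_le.1 fun h' => h (hsub h')).le
      simpa [h] using this
  have h0 := (ENNReal.add_le_add_iff_left (hgeq ▸ hf)).1 hle
  simpa [hε] using h0

end OuterFull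

section Cover

variable {X : Type*}

/-- The product space is covered by countably many rectangles on which `c` is almost constant. -/
lemma HypC.exists_cover [Nonempty X] {c : X → X → ℝ} {B : ℝ} (hC : HypC c B) {ε : ℝ}
    (hε : 0 < ε) : ∃ (U V : ℕ → Set X) (r : ℕ → ℝ), (∀ x y, ∃ k, x ∈ U k ∧ y ∈ V k) ∧
      ∀ k, ∀ x ∈ U k, ∀ y ∈ V k, |c x y - r k| ≤ ε := by
  classical
  obtain ⟨D, hD, hdense⟩ := hC.separable
  have hne : D.Nonempty := by
    obtain ⟨y, hy, -⟩ := hdense (Classical.arbitrary X) 1 one_pos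
    exact ⟨y, hy⟩
  obtain ⟨d, rfl⟩ := hD.exists_eq_range hne
  let ball : X → ℕ → Set X := fun a n => {z | c z a < 1 / ((n : ℝ) + 1)}
  let good : ℕ × ℕ × ℕ → Prop := fun q =>
    ∀ x ∈ ball (d q.1) q.2.2, ∀ y ∈ ball (d q.2.1) q.2.2, |c x y - c (d q.1) (d q.2.1)| ≤ ε
  obtain ⟨e, he⟩ := exists_surjective_nat (ℕ × ℕ × ℕ)
  refine ⟨fun k => {x | good (e k) ∧ x ∈ ball (d (e k).1) (e k).2.2},
    fun k => ball (d (e k).2.1) (e k).2.2, fun k => c (d (e k).1) (d (e k).2.1), ?_,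
    fun k x hx y hy => hx.1 x hx.2 y hy⟩
  intro x y
  have hpos : ∀ n : ℕ, (0 : ℝ) < 1 / ((n : ℝ) + 1) := fun n => by positivity
  have hnear : ∀ a : X, ∀ n : ℕ, ∃ i, c a (d i) < 1 / ((n : ℝ) + 1) := by
    intro a n
    obtain ⟨_, ⟨i, rfl⟩, hi⟩ := hdense a _ (hpos n)
    exact ⟨i, hi⟩
  choose i hi using hnear x
  choose j hj using hnear y
  by_cases hgood : ∃ n, good (i n, j n, n)
  · obtain ⟨n, hn⟩ := hgood
    obtain ⟨k, hk⟩ := he (i n, j n, n)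
    refine ⟨k, ?_, ?_⟩
    · simp only [hk]
      exact ⟨hn, hi n⟩
    · simp only [hk]
      exact hj n
  exfalso
  push Not at hgood
  have hbad : ∀ n, ∃ u v, c u (d (i n)) < 1 / ((n : ℝ) + 1) ∧ c v (d (j n)) < 1 / ((n : ℝ) + 1) ∧
      ε < |c u v - c (d (i n)) (d (j n))| := by
    intro n
    have := hgood n
    simp only [good] at this
    push Not at this
    obtain ⟨u, hu, v, hv, h⟩ := this
    exact ⟨u, v, hu, hv, h⟩
  choose u v hu hv huv using hbad
  have hlim : Tendsto (fun n : ℕ => 1 / ((n : ℝ) + 1)) atTop (𝓝 0) :=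
    tendsto_one_div_add_atTop_nhds_zero_nat
  have hdense_conv : ∀ (a : X) (s : ℕ → ℕ), (∀ n, c a (d (s n)) < 1 / ((n : ℝ) + 1)) →
      CConv c (fun n => d (s n)) a := fun a s hs =>
    squeeze_zero (fun n => hC.semimetric.nonneg _ _)
      (fun n => by rw [hC.semimetric.symm]; exact (hs n).le) hlim
  have hconv : ∀ (a : X) (s : ℕ → ℕ) (w : ℕ → X), (∀ n, c a (d (s n)) < 1 / ((n : ℝ) + 1)) →
      (∀ n, c (w n) (d (s n)) < 1 / ((n : ℝ) + 1)) → CConv c w a := by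
    intro a s w hs hw
    have hlim2 : Tendsto (fun n : ℕ => B * (1 / ((n : ℝ) + 1) + 1 / ((n : ℝ) + 1))) atTop
        (𝓝 0) := by simpa using (hlim.add hlim).const_mul B
    refine squeeze_zero (fun n => hC.semimetric.nonneg _ _) (fun n => ?_) hlim2
    refine (hC.relaxed _ _ (d (s n))).trans ?_
    have hB : (0 : ℝ) ≤ B := zero_le_one.trans hC.one_le
    refine mul_le_mul_of_nonneg_left (add_le_add (hw n).le ?_) hB
    rw [hC.semimetric.symm]
    exact (hs n).le
  have h1 := hC.contC _ _ x y (hconv x i u hi hu) (hconv y j v hj hv)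
  have h2 := hC.contC _ _ x y (hdense_conv x i hi) (hdense_conv y j hj)
  have h3 : Tendsto (fun n => |c (u n) (v n) - c (d (i n)) (d (j n))|) atTop (𝓝 0) := by
    simpa using (h1.sub h2).abs
  obtain ⟨n, hn⟩ := (h3.eventually (gt_mem_nhds hε)).exists
  exact (huv n).not_gt hn

end Cover

section Block

variable {X : Type*} [MeasurableSpace X]

lemma OuterFull.prod {κ η : Measure X} [SFinite κ] [SFinite η] {U V : Set X}
    (hU : OuterFull κ U) (hV : OuterFull η V) : OuterFull (κ.prod η) (U ×ˢ V) := by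
  intro A hA hsub
  rw [Measure.measure_prod_null hA.compl]
  refine hU.ae ?_ fun x hx => ?_
  · exact measurable_measure_prodMk_left hA.compl (measurableSet_singleton 0)
  · exact hV (Prod.mk x ⁻¹' A) (measurable_prodMk_left hA) fun y hy => hsub ⟨hx, hy⟩

/-- Any coupling can be replaced, at an arbitrarily small extra cost, by one that is absolutely
continuous with respect to the product of the marginals. -/
lemma HypC.exists_coupling_absolutelyContinuous {c : X → X → ℝ} {B : ℝ} (hC : HypC c B)
    {κ η : Measure X} [IsProbabilityMeasure κ] [IsProbabilityMeasure η] {π : Measure (X × X)}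
    (hπ : IsCoupling κ η π) {ε : ℝ} (hε : 0 < ε) :
    ∃ π' : Measure (X × X), IsCoupling κ η π' ∧ π' ≪ κ.prod η ∧
      ∫⁻ p, ENNReal.ofReal (c p.1 p.2) ∂π' ≤
        ∫⁻ p, ENNReal.ofReal (c p.1 p.2) ∂π + 3 * ENNReal.ofReal ε := by
  classical
  by_cases hfin : ∫⁻ p, ENNReal.ofReal (c p.1 p.2) ∂π = ⊤
  · refine ⟨κ.prod η, ⟨inferInstance, ?_, ?_⟩, Measure.AbsolutelyContinuous.rfl, ?_⟩
    · simp [Measure.map_fst_prod]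
    · simp [Measure.map_snd_prod]
    · simp [hfin]
  obtain ⟨hπ1, hfst, hsnd⟩ := hπ
  have hne : Nonempty X := (nonempty_of_isProbabilityMeasure κ)
  obtain ⟨U, V, r, hcov, hosc⟩ := hC.exists_cover hε
  have hε' : ENNReal.ofReal ε ≠ 0 := by simpa using hε
  obtain ⟨g, hg, hgint, hS⟩ := exists_measurable_minorant _ hfin hε'
  have hcov' : ∀ p : X × X, ∃ k, p.1 ∈ U k ∧ p.2 ∈ V k := fun p => hcov _ _
  choose N hNU hNV using hcov'
  obtain ⟨n, hn, hfull⟩ := hS.exists_measurable_eq N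
  let D : ℕ → Set (X × X) := fun k => n ⁻¹' {k}
  have hD : ∀ k, MeasurableSet (D k) := fun k => hn (measurableSet_singleton k)
  have hDdisj : Pairwise (Function.onFun Disjoint D) := fun i j hij =>
    Set.disjoint_left.2 fun p hi hj => hij (hi.symm.trans hj)
  have hDU : ⋃ k, D k = Set.univ := Set.eq_univ_of_forall fun p => Set.mem_iUnion.2 ⟨n p, rfl⟩
  have hsum : Measure.sum (fun k => π.restrict (D k)) = π := by
    rw [← Measure.restrict_iUnion hDdisj hD, hDU, Measure.restrict_univ]
  let κ' : ℕ → Measure X := fun k => (π.restrict (D k)).map Prod.fst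
  let η' : ℕ → Measure X := fun k => (π.restrict (D k)).map Prod.snd
  let p : ℕ → ℝ≥0∞ := fun k => π (D k)
  have hκU : ∀ k, κ' k Set.univ = p k := fun k => by
    simp [κ', p, Measure.map_apply measurable_fst MeasurableSet.univ]
  have hηU : ∀ k, η' k Set.univ = p k := fun k => by
    simp [η', p, Measure.map_apply measurable_snd MeasurableSet.univ]
  have hκsum : Measure.sum κ' = κ := by
    rw [← hfst, ← hsum, Measure.map_sum measurable_fst.aemeasurable]
  have hηsum : Measure.sum η' = η := by
    rw [← hsnd, ← hsum, Measure.map_sum measurable_snd.aemeasurable]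
  have hpfin : ∀ k, p k ≠ ⊤ := fun k => measure_ne_top _ _
  have hκ0 : ∀ k, p k = 0 → κ' k = 0 := fun k h => Measure.measure_univ_eq_zero.1 ((hκU k).trans h)
  have hη0 : ∀ k, p k = 0 → η' k = 0 := fun k h => Measure.measure_univ_eq_zero.1 ((hηU k).trans h)
  let ρ : ℕ → Measure (X × X) := fun k => (p k)⁻¹ • (κ' k).prod (η' k)
  have hρfst : ∀ k, (ρ k).map Prod.fst = κ' k := by
    intro k
    by_cases h : p k = 0
    · simp [ρ, hκ0 k h]
    · simp only [ρ, Measure.map_smul, Measure.map_fst_prod, hηU, smul_smul]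
      rw [ENNReal.inv_mul_cancel h (hpfin k), one_smul]
  have hρsnd : ∀ k, (ρ k).map Prod.snd = η' k := by
    intro k
    by_cases h : p k = 0
    · simp [ρ, hη0 k h]
    · simp only [ρ, Measure.map_smul, Measure.map_snd_prod, hκU, smul_smul]
      rw [ENNReal.inv_mul_cancel h (hpfin k), one_smul]
  have hmfst : (Measure.sum ρ).map Prod.fst = κ := by
    rw [Measure.map_sum measurable_fst.aemeasurable]
    simp_rw [hρfst, hκsum]
  have hmsnd : (Measure.sum ρ).map Prod.snd = η := by
    rw [Measure.map_sum measurable_snd.aemeasurable]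
    simp_rw [hρsnd, hηsum]
  refine ⟨Measure.sum ρ, ⟨⟨?_⟩, hmfst, hmsnd⟩, ?_, ?_⟩
  · have := congrArg (fun m => m Set.univ) hmfst
    simpa [Measure.map_apply measurable_fst MeasurableSet.univ] using this
  · refine Measure.absolutelyContinuous_sum_left fun k => ?_
    refine Measure.AbsolutelyContinuous.trans Measure.smul_absolutelyContinuous ?_
    refine Measure.AbsolutelyContinuous.prod ?_ ?_
    · rw [← hκsum]; exact Measure.absolutelyContinuous_sum_right k Measure.AbsolutelyContinuous.rfl
    · rw [← hηsum]; exact Measure.absolutelyContinuous_sum_right k Measure.AbsolutelyContinuous.rfl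
  -- full outer measure of the cells with respect to the pieces
  have hcell : ∀ k, OuterFull (π.restrict (D k))
      {q | q.1 ∈ U k ∧ q.2 ∈ V k ∧ ENNReal.ofReal (c q.1 q.2) ≤ g q + ENNReal.ofReal ε} := by
    intro k A hA hsub
    rw [Measure.restrict_apply hA.compl]
    have := hfull (A ∪ (D k)ᶜ) (hA.union (hD k).compl) ?_
    · simpa [Set.compl_union] using this
    · rintro q ⟨hq, hqN⟩
      by_cases hqk : q ∈ D k
      · have hNk : N q = k := hqN.trans hqk
        exact Or.inl (hsub ⟨hNk ▸ hNU q, hNk ▸ hNV q, hq⟩)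
      · exact Or.inr hqk
  have hκfull : ∀ k, OuterFull (κ' k) (U k) := by
    intro k A hA hsub
    rw [Measure.map_apply measurable_fst hA.compl]
    exact hcell k _ (measurable_fst hA) fun q hq => hsub hq.1
  have hηfull : ∀ k, OuterFull (η' k) (V k) := by
    intro k A hA hsub
    rw [Measure.map_apply measurable_snd hA.compl]
    exact hcell k _ (measurable_snd hA) fun q hq => hsub hq.2.1
  have hcost : ∀ k, ∫⁻ q, ENNReal.ofReal (c q.1 q.2) ∂(ρ k) ≤
      ENNReal.ofReal (r k + ε) * p k := by
    intro k
    obtain ⟨h, hh, hhc, hhint⟩ :=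
      exists_measurable_le_lintegral_eq ((κ' k).prod (η' k)) fun q => ENNReal.ofReal (c q.1 q.2)
    have hae : ∀ᵐ q ∂((κ' k).prod (η' k)), h q ≤ ENNReal.ofReal (r k + ε) := by
      refine ((hκfull k).prod (hηfull k)).ae (measurableSet_le hh measurable_const) ?_
      rintro q ⟨hq1, hq2⟩
      refine (hhc q).trans (ENNReal.ofReal_le_ofReal ?_)
      have := (abs_le.1 (hosc k _ hq1 _ hq2)).2
      linarith
    simp only [ρ, lintegral_smul_measure, hhint]
    have hle : ∫⁻ q, h q ∂((κ' k).prod (η' k)) ≤ ENNReal.ofReal (r k + ε) * (p k * p k) := by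
      refine (lintegral_mono_ae hae).trans ?_
      rw [lintegral_const, ← Set.univ_prod_univ, Measure.prod_prod, hκU, hηU]
    by_cases h0 : p k = 0
    · simp [hκ0 k h0]
    · calc (p k)⁻¹ • ∫⁻ q, h q ∂((κ' k).prod (η' k))
          ≤ (p k)⁻¹ * (ENNReal.ofReal (r k + ε) * (p k * p k)) := by
            rw [smul_eq_mul]; gcongr
        _ = ((p k)⁻¹ * p k) * (ENNReal.ofReal (r k + ε) * p k) := by ring
        _ = _ := by rw [ENNReal.inv_mul_cancel h0 (hpfin k), one_mul]
  have hlow : ∀ k, ENNReal.ofReal (r k + ε) * p k ≤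
      ∫⁻ q, (g q + 3 * ENNReal.ofReal ε) ∂(π.restrict (D k)) := by
    intro k
    have hae : ∀ᵐ q ∂(π.restrict (D k)),
        ENNReal.ofReal (r k + ε) ≤ g q + 3 * ENNReal.ofReal ε := by
      refine (hcell k).ae (measurableSet_le measurable_const (hg.add_const _)) ?_
      rintro q ⟨hq1, hq2, hq⟩
      have hb := (abs_le.1 (hosc k _ hq1 _ hq2)).1
      calc ENNReal.ofReal (r k + ε) ≤ ENNReal.ofReal (c q.1 q.2 + (ε + ε)) :=
            ENNReal.ofReal_le_ofReal (by linarith)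
        _ ≤ ENNReal.ofReal (c q.1 q.2) + (ENNReal.ofReal ε + ENNReal.ofReal ε) := by
            rw [← ENNReal.ofReal_add hε.le hε.le]; exact ENNReal.ofReal_add_le
        _ ≤ (g q + ENNReal.ofReal ε) + (ENNReal.ofReal ε + ENNReal.ofReal ε) := by gcongr
        _ = _ := by ring
    calc ENNReal.ofReal (r k + ε) * p k
        = ∫⁻ _, ENNReal.ofReal (r k + ε) ∂(π.restrict (D k)) := by simp [p]
      _ ≤ _ := lintegral_mono_ae hae
  calc ∫⁻ q, ENNReal.ofReal (c q.1 q.2) ∂(Measure.sum ρ)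
      = ∑' k, ∫⁻ q, ENNReal.ofReal (c q.1 q.2) ∂(ρ k) := lintegral_sum_measure _ _
    _ ≤ ∑' k, ∫⁻ q, (g q + 3 * ENNReal.ofReal ε) ∂(π.restrict (D k)) :=
        ENNReal.tsum_le_tsum fun k => (hcost k).trans (hlow k)
    _ = ∫⁻ q, (g q + 3 * ENNReal.ofReal ε) ∂π := by rw [← lintegral_sum_measure, hsum]
    _ = _ := by rw [lintegral_add_left hg, hgint]; simp

end Block

end PoC

namespace PoC

section Averaging

variable {Ω : Type*} [MeasurableSpace Ω] {γ : Measure Ω} [IsProbabilityMeasure γ]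

/-- A finitely additive extension of `γ` to all bounded functions that is carried by a decreasing
sequence of (possibly nonmeasurable) sets of full outer measure. -/
lemma exists_linear_le_integral {S : ℕ → Set Ω} (hanti : Antitone S)
    (hS : ∀ j, OuterFull γ (S j)) :
    ∃ ℓ : (Ω → ℝ) →ₗ[ℝ] ℝ, ∀ φ g : Ω → ℝ, (∃ C, ∀ ω, |φ ω| ≤ C) → Measurable g →
      Integrable g γ → (∃ j, ∀ ω ∈ S j, φ ω ≤ g ω) → ℓ φ ≤ ∫ ω, g ω ∂γ := by
  let E : Submodule ℝ (Ω → ℝ) :=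
    { carrier := {φ | ∃ C, ∀ ω, |φ ω| ≤ C}
      add_mem' := by
        rintro φ ψ ⟨C, hC⟩ ⟨D, hD⟩
        exact ⟨C + D, fun ω => (abs_add_le _ _).trans (add_le_add (hC ω) (hD ω))⟩
      zero_mem' := ⟨0, by simp⟩
      smul_mem' := by
        rintro a φ ⟨C, hC⟩
        refine ⟨|a| * C, fun ω => ?_⟩
        rw [Pi.smul_apply, smul_eq_mul, abs_mul]
        exact mul_le_mul_of_nonneg_left (hC ω) (abs_nonneg a) }
  let T : (Ω → ℝ) → Set ℝ := fun φ =>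
    {t | ∃ g : Ω → ℝ, Measurable g ∧ Integrable g γ ∧ (∃ j, ∀ ω ∈ S j, φ ω ≤ g ω) ∧
      ∫ ω, g ω ∂γ = t}
  have hTne : ∀ φ : E, (T φ).Nonempty := by
    rintro ⟨φ, C, hC⟩
    exact ⟨_, fun _ => C, measurable_const, integrable_const C,
      ⟨0, fun ω _ => (le_abs_self _).trans (hC ω)⟩, rfl⟩
  have hTbdd : ∀ φ : E, BddBelow (T φ) := by
    rintro ⟨φ, C, hC⟩
    refine ⟨-C, ?_⟩
    rintro t ⟨g, hg, hgi, ⟨j, hj⟩, rfl⟩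
    have hae : ∀ᵐ ω ∂γ, -C ≤ g ω :=
      (hS j).ae (measurableSet_le measurable_const hg) fun ω hω =>
        (neg_le_of_abs_le (hC ω)).trans (hj ω hω)
    simpa using integral_mono_ae (integrable_const (-C)) hgi hae
  have hsmul_mem : ∀ (a : ℝ), 0 < a → ∀ φ t, t ∈ T φ → a * t ∈ T (a • φ) := by
    rintro a ha φ t ⟨g, hg, hgi, ⟨j, hj⟩, rfl⟩
    exact ⟨fun ω => a * g ω, hg.const_mul a, hgi.const_mul a,
      ⟨j, fun ω hω => mul_le_mul_of_nonneg_left (hj ω hω) ha.le⟩, integral_const_mul _ _⟩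
  have hsmul_le : ∀ (a : ℝ), 0 < a → ∀ φ : E, sInf (T (a • φ : E)) ≤ a * sInf (T φ) := by
    intro a ha φ
    rw [← div_le_iff₀' ha]
    refine le_csInf (hTne φ) fun t ht => ?_
    rw [div_le_iff₀' ha]
    exact csInf_le (hTbdd (a • φ)) (hsmul_mem a ha φ t ht)
  have hsmul : ∀ a : ℝ, 0 < a → ∀ φ : E, sInf (T (a • φ : E)) = a * sInf (T φ) := by
    intro a ha φ
    refine le_antisymm (hsmul_le a ha φ) ?_
    have h := hsmul_le a⁻¹ (inv_pos.2 ha) (a • φ)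
    rw [smul_smul, inv_mul_cancel₀ ha.ne', one_smul] at h
    calc a * sInf (T φ) ≤ a * (a⁻¹ * sInf (T (a • φ : E))) := by gcongr
      _ = _ := by rw [mul_inv_cancel_left₀ ha.ne']
  have hadd : ∀ φ ψ : E, sInf (T (φ + ψ : E)) ≤ sInf (T φ) + sInf (T ψ) := by
    intro φ ψ
    refine le_of_forall_pos_lt_add fun ε hε => ?_
    obtain ⟨s, ⟨g, hg, hgi, ⟨i, hi⟩, rfl⟩, hs⟩ :=
      exists_lt_of_csInf_lt (hTne φ) (lt_add_of_pos_right _ (half_pos hε))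
    obtain ⟨t, ⟨h, hh, hhi, ⟨j, hj⟩, rfl⟩, ht⟩ :=
      exists_lt_of_csInf_lt (hTne ψ) (lt_add_of_pos_right _ (half_pos hε))
    have hmem : ∫ ω, g ω ∂γ + ∫ ω, h ω ∂γ ∈ T (φ + ψ : E) :=
      ⟨fun ω => g ω + h ω, hg.add hh, hgi.add hhi,
        ⟨max i j, fun ω hω => add_le_add (hi ω (hanti (le_max_left i j) hω))
          (hj ω (hanti (le_max_right i j) hω))⟩, integral_add hgi hhi⟩
    have := csInf_le (hTbdd (φ + ψ)) hmem
    linarith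
  have hzero : 0 ≤ sInf (T (0 : E)) := by
    refine le_csInf (hTne 0) ?_
    rintro t ⟨g, hg, hgi, ⟨j, hj⟩, rfl⟩
    exact integral_nonneg_of_ae <|
      (hS j).ae (measurableSet_le measurable_const hg) fun ω hω => hj ω hω
  obtain ⟨ℓ, -, hℓ⟩ := exists_extension_of_le_sublinear (E := E) (⊥ : E →ₗ.[ℝ] ℝ)
    (fun φ => sInf (T φ)) hsmul hadd fun x => by
      have hx : x = 0 := Subtype.ext ((Submodule.mem_bot ℝ).1 x.2)
      subst hx
      rw [LinearPMap.map_zero]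
      exact hzero
  obtain ⟨L, hL⟩ := ℓ.exists_extend
  refine ⟨L, fun φ g hφ hg hgi hle => ?_⟩
  have h1 : L φ = ℓ ⟨φ, hφ⟩ := by rw [← hL]; rfl
  rw [h1]
  exact (hℓ _).trans (csInf_le (hTbdd ⟨φ, hφ⟩) ⟨g, hg, hgi, hle, rfl⟩)

variable {Y : Type*} [MeasurableSpace Y]

lemma exists_nat_measureReal_le {P Q : Measure Y} [IsProbabilityMeasure P]
    [IsProbabilityMeasure Q] (h : P ≪ Q) {ε : ℝ} (hε : 0 < ε) :
    ∃ N : ℕ, ∀ E, P.real E ≤ ε + N * Q.real E := by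
  have hfin : ∫⁻ y, P.rnDeriv Q y ∂Q ≠ ⊤ := by
    rw [Measure.lintegral_rnDeriv h]
    exact measure_ne_top _ _
  obtain ⟨δ, hδ, hlt⟩ := exists_pos_setLIntegral_lt_of_measure_lt hfin
    (ENNReal.ofReal_pos.2 hε).ne'
  obtain ⟨N, hN⟩ := ENNReal.exists_nat_mul_gt hδ.ne' ENNReal.one_ne_top
  refine ⟨N, fun E => ?_⟩
  rcases lt_or_ge (Q E) δ with hE | hE
  · have h1 := hlt E hE
    rw [Measure.setLIntegral_rnDeriv h] at h1
    have h2 : P.real E ≤ ε := ENNReal.toReal_le_of_le_ofReal hε.le h1.le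
    have : (0 : ℝ) ≤ N * Q.real E := by positivity
    linarith
  · have h1 : (1 : ℝ≥0∞) ≤ N * Q E := hN.le.trans (by gcongr)
    have h2 : (1 : ℝ) ≤ N * Q.real E := by
      have := ENNReal.toReal_mono (by finiteness) h1
      simpa [Measure.real] using this
    have h3 : P.real E ≤ 1 := measureReal_le_one
    linarith

/-- A real-valued finitely additive set function, continuous at `∅`, comes from a measure. -/
lemma exists_measure_of_additive {v : Set Y → ℝ} (hnn : ∀ E, 0 ≤ v E) (h0 : v ∅ = 0)
    (hadd : ∀ s t, MeasurableSet s → MeasurableSet t → Disjoint s t → v (s ∪ t) = v s + v t)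
    (hcont : ∀ s : ℕ → Set Y, (∀ n, MeasurableSet (s n)) → Antitone s → ⋂ n, s n = ∅ →
      Tendsto (fun n => v (s n)) atTop (𝓝 0)) :
    ∃ ν : Measure Y, ∀ E, MeasurableSet E → ν E = ENNReal.ofReal (v E) := by
  have hring : IsSetRing {s : Set Y | MeasurableSet s} :=
    ⟨MeasurableSet.empty, fun _ _ hs ht => MeasurableSet.union hs ht,
      fun _ _ hs ht => MeasurableSet.diff hs ht⟩
  let m : AddContent ℝ≥0∞ {s : Set Y | MeasurableSet s} :=
    hring.addContent_of_union (fun E => ENNReal.ofReal (v E)) (by simp [h0])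
      fun {s t} hs ht hst => by
        simp only [hadd s t hs ht hst, ENNReal.ofReal_add (hnn s) (hnn t)]
  refine ⟨Measure.ofMeasurable (fun E _ => m E) addContent_empty fun f hf hd => ?_,
    fun E hE => Measure.ofMeasurable_apply E hE⟩
  refine addContent_iUnion_eq_sum_of_tendsto_zero hring m (fun s _ => ENNReal.ofReal_ne_top)
    (fun s hs ha hi => ?_) hf (MeasurableSet.iUnion hf) hd
  have h := (ENNReal.continuous_ofReal.tendsto 0).comp (hcont s hs ha hi)
  rw [ENNReal.ofReal_zero] at h
  exact h

/-- Averaging an arbitrary family of probability measures `P ω`, absolutely continuous with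
respect to a Markov kernel, against `γ`. -/
lemma exists_averaged_measure (Q : ProbabilityTheory.Kernel Ω Y)
    [ProbabilityTheory.IsMarkovKernel Q] (P : Ω → Measure Y) [∀ ω, IsProbabilityMeasure (P ω)]
    (hPQ : ∀ ω, P ω ≪ Q ω) {S₀ : Set Ω} (hS₀ : OuterFull γ S₀) :
    ∃ ν : Measure Y, IsProbabilityMeasure ν ∧
      ∀ (s : SimpleFunc Y NNReal) (g : Ω → ℝ≥0∞), Measurable g →
        (∀ ω ∈ S₀, ∫⁻ y, s y ∂(P ω) ≤ g ω) → ∫⁻ y, s y ∂ν ≤ ∫⁻ ω, g ω ∂γ := by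
  have hN : ∀ (j : ℕ) (ω : Ω), ∃ N : ℕ, ∀ E,
      (P ω).real E ≤ 1 / ((j : ℝ) + 1) + N * (Q ω).real E :=
    fun j ω => exists_nat_measureReal_le (hPQ ω) (by positivity)
  choose N hN using hN
  have hstep : ∀ (j : ℕ) (S : {S : Set Ω // OuterFull γ S}), ∃ n : Ω → ℕ, Measurable n ∧
      OuterFull γ {ω | ω ∈ S.1 ∧ N j ω = n ω} := fun j S => S.2.exists_measurable_eq (N j)
  choose n hn hnS using hstep
  let S : ℕ → {S : Set Ω // OuterFull γ S} := fun j =>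
    Nat.rec ⟨S₀, hS₀⟩ (fun j S => ⟨_, hnS j S⟩) j
  have hanti : Antitone fun j => (S j).1 := antitone_nat_of_succ_le fun j ω hω => hω.1
  obtain ⟨ℓ, hℓ⟩ := exists_linear_le_integral hanti fun j => (S j).2
  have hbd : ∀ E, ∃ C, ∀ ω, |(P ω).real E| ≤ C := fun E =>
    ⟨1, fun ω => by rw [abs_of_nonneg measureReal_nonneg]; exact measureReal_le_one⟩
  let v : Set Y → ℝ := fun E => ℓ fun ω => (P ω).real E
  have hnn : ∀ E, 0 ≤ v E := by
    intro E
    obtain ⟨C, hC⟩ := hbd E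
    have := hℓ (-fun ω => (P ω).real E) 0 ⟨C, fun ω => by simpa using hC ω⟩ measurable_zero
      (integrable_zero _ _ _) ⟨0, fun ω _ => by simp⟩
    rw [map_neg] at this
    simpa using this
  have hadd : ∀ s t, MeasurableSet s → MeasurableSet t → Disjoint s t →
      v (s ∪ t) = v s + v t := by
    intro s t _ ht hst
    simp only [v, ← map_add]
    congr 1
    funext ω
    exact measureReal_union hst ht
  have huniv : v Set.univ = 1 := by
    have h1 := hℓ (fun ω => (P ω).real Set.univ) (fun _ => 1) (hbd _) measurable_const
      (integrable_const _) ⟨0, fun ω _ => by simp⟩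
    have h2 := hℓ (-fun ω => (P ω).real Set.univ) (fun _ => -1) ⟨1, fun ω => by simp⟩
      measurable_const (integrable_const _) ⟨0, fun ω _ => by simp⟩
    rw [map_neg] at h2
    refine le_antisymm (by simpa [v] using h1) ?_
    have h3 : -v Set.univ ≤ -1 := by simpa [v] using h2
    linarith
  have hcont : ∀ s : ℕ → Set Y, (∀ n, MeasurableSet (s n)) → Antitone s → ⋂ n, s n = ∅ →
      Tendsto (fun n => v (s n)) atTop (𝓝 0) := by
    intro s hs hsa hsi
    have hQlim : ∀ ω, Tendsto (fun i => (Q ω).real (s i)) atTop (𝓝 0) := by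
      intro ω
      have h := tendsto_measure_iInter_atTop (μ := Q ω)
        (fun i => (hs i).nullMeasurableSet) hsa ⟨0, measure_ne_top _ _⟩
      rw [hsi, measure_empty] at h
      simpa [Measure.real, Function.comp_def] using (ENNReal.tendsto_toReal ENNReal.zero_ne_top).comp h
    let G : ℕ → ℕ → Ω → ℝ := fun j i ω =>
      min 1 (1 / ((j : ℝ) + 1) + n j (S j) ω * (Q ω).real (s i))
    have hGm : ∀ j i, Measurable (G j i) := by
      intro j i
      have h1 : Measurable fun ω => (Q ω).real (s i) :=
        (Q.measurable_coe (hs i)).ennreal_toReal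
      have h2 : Measurable fun ω => (n j (S j) ω : ℝ) :=
        measurable_from_nat.comp (hn j (S j))
      exact measurable_const.min (measurable_const.add (h2.mul h1))
    have hG0 : ∀ j i ω, 0 ≤ G j i ω := fun j i ω => le_min zero_le_one (by positivity)
    have hGb : ∀ j i ω, ‖G j i ω‖ ≤ 1 := fun j i ω => by
      rw [Real.norm_of_nonneg (hG0 j i ω)]
      exact min_le_left _ _
    have hGi : ∀ j i, Integrable (G j i) γ := fun j i =>
      Integrable.of_bound (hGm j i).aestronglyMeasurable 1 (ae_of_all _ (hGb j i))
    have hvG : ∀ j i, v (s i) ≤ ∫ ω, G j i ω ∂γ := by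
      intro j i
      refine hℓ _ _ (hbd _) (hGm j i) (hGi j i) ⟨j + 1, fun ω hω => le_min measureReal_le_one ?_⟩
      have hω' : N j ω = n j (S j) ω := hω.2
      rw [← hω']
      exact hN j ω (s i)
    have hGlim : ∀ j : ℕ, Tendsto (fun i => ∫ ω, G j i ω ∂γ) atTop
        (𝓝 (min 1 (1 / ((j : ℝ) + 1)))) := by
      intro j
      have h := tendsto_integral_of_dominated_convergence (μ := γ) (F := G j)
        (f := fun _ => min 1 (1 / ((j : ℝ) + 1))) (fun _ => (1 : ℝ))
        (fun i => (hGm j i).aestronglyMeasurable) (integrable_const 1)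
        (fun i => ae_of_all _ (hGb j i)) (ae_of_all _ fun ω => ?_)
      · simpa using h
      · refine tendsto_const_nhds.min ?_
        simpa using ((hQlim ω).const_mul (n j (S j) ω : ℝ)).const_add (1 / ((j : ℝ) + 1))
    rw [tendsto_order]
    refine ⟨fun a ha => Eventually.of_forall fun i => ha.trans_le (hnn _), fun a ha => ?_⟩
    obtain ⟨j, hj⟩ := exists_nat_one_div_lt ha
    filter_upwards [(hGlim j).eventually (gt_mem_nhds ((min_le_right _ _).trans_lt hj))] with i hi
    exact (hvG j i).trans_lt hi
  have hempty : v ∅ = 0 := by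
    have h : (fun ω => (P ω).real ∅) = 0 := by
      funext ω
      simp
    simp only [v, h, map_zero]
  obtain ⟨ν, hν⟩ := exists_measure_of_additive hnn hempty hadd hcont
  refine ⟨ν, ⟨by rw [hν _ MeasurableSet.univ, huniv, ENNReal.ofReal_one]⟩, ?_⟩
  intro s g hg hle
  have hlin : ∀ ρ : Measure Y, ∫⁻ y, s y ∂ρ = ∑ x ∈ s.range, (x : ℝ≥0∞) * ρ (s ⁻¹' {x}) := by
    intro ρ
    rw [← SimpleFunc.map_lintegral, ← SimpleFunc.lintegral_eq_lintegral]
    rfl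
  let φ : Ω → ℝ := fun ω => ∑ x ∈ s.range, (x : ℝ) * (P ω).real (s ⁻¹' {x})
  have hφP : ∀ ω, ∫⁻ y, s y ∂(P ω) = ENNReal.ofReal (φ ω) := by
    intro ω
    rw [hlin, ENNReal.ofReal_sum_of_nonneg fun x _ => by positivity]
    refine Finset.sum_congr rfl fun x _ => ?_
    rw [ENNReal.ofReal_mul (NNReal.coe_nonneg x), ENNReal.ofReal_coe_nnreal, ofReal_measureReal]
  have hφ0 : ∀ ω, 0 ≤ φ ω := fun ω => Finset.sum_nonneg fun x _ => by positivity
  have hφν : ∫⁻ y, s y ∂ν = ENNReal.ofReal (ℓ φ) := by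
    have h1 : φ = ∑ x ∈ s.range, (x : ℝ) • fun ω => (P ω).real (s ⁻¹' {x}) := by
      funext ω
      simp [φ]
    rw [hlin, h1, map_sum, ENNReal.ofReal_sum_of_nonneg]
    · refine Finset.sum_congr rfl fun x _ => ?_
      rw [map_smul, smul_eq_mul, ENNReal.ofReal_mul (NNReal.coe_nonneg x), ENNReal.ofReal_coe_nnreal,
        hν _ (s.measurableSet_fiber x)]
    · intro x _
      rw [map_smul, smul_eq_mul]
      exact mul_nonneg x.2 (hnn _)
  let C : ℝ := ∑ x ∈ s.range, (x : ℝ)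
  have hC0 : 0 ≤ C := Finset.sum_nonneg fun x _ => x.2
  have hφC : ∀ ω, φ ω ≤ C := fun ω => Finset.sum_le_sum fun x _ =>
    mul_le_of_le_one_right x.2 measureReal_le_one
  let h : Ω → ℝ≥0∞ := fun ω => min (g ω) (ENNReal.ofReal C)
  have hh : Measurable h := hg.min measurable_const
  have hhC : ∀ ω, h ω ≤ ENNReal.ofReal C := fun ω => min_le_right _ _
  have hhtop : ∀ ω, h ω ≠ ⊤ := fun ω => ne_top_of_le_ne_top ENNReal.ofReal_ne_top (hhC ω)
  have hhi : Integrable (fun ω => (h ω).toReal) γ := by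
    refine Integrable.of_bound hh.ennreal_toReal.aestronglyMeasurable C (ae_of_all _ fun ω => ?_)
    rw [Real.norm_of_nonneg ENNReal.toReal_nonneg]
    exact ENNReal.toReal_le_of_le_ofReal hC0 (hhC ω)
  have key := hℓ φ (fun ω => (h ω).toReal)
    ⟨C, fun ω => by rw [abs_of_nonneg (hφ0 ω)]; exact hφC ω⟩ hh.ennreal_toReal hhi
    ⟨0, fun ω hω => by
      rw [← ENNReal.ofReal_le_iff_le_toReal (hhtop ω)]
      exact le_min ((hφP ω).symm.trans_le (hle ω hω)) (ENNReal.ofReal_le_ofReal (hφC ω))⟩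
  rw [hφν]
  calc ENNReal.ofReal (ℓ φ) ≤ ENNReal.ofReal (∫ ω, (h ω).toReal ∂γ) :=
        ENNReal.ofReal_le_ofReal key
    _ = ∫⁻ ω, h ω ∂γ := by
        rw [ofReal_integral_eq_lintegral_ofReal hhi
          (ae_of_all _ fun ω => ENNReal.toReal_nonneg)]
        exact lintegral_congr fun ω => ENNReal.ofReal_toReal (hhtop ω)
    _ ≤ _ := lintegral_mono fun ω => min_le_left _ _

end Averaging

end PoC

namespace PoC

variable {X : Type*} [MeasurableSpace X]

/-- Near-optimal couplings can be taken absolutely continuous with respect to the product. -/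
lemma HypC.exists_coupling_lintegral_le_cost {c : X → X → ℝ} {B : ℝ} (hC : HypC c B)
    (κ η : Measure X) [IsProbabilityMeasure κ] [IsProbabilityMeasure η] {ε : ℝ} (hε : 0 < ε) :
    ∃ π : Measure (X × X), IsCoupling κ η π ∧ π ≪ κ.prod η ∧
      ∫⁻ p, ENNReal.ofReal (c p.1 p.2) ∂π ≤ cost c κ η + 4 * ENNReal.ofReal ε := by
  have hε' : ENNReal.ofReal ε ≠ 0 := by simpa using hε
  obtain ⟨π₀, hπ₀, hle⟩ : ∃ π₀, IsCoupling κ η π₀ ∧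
      ∫⁻ p, ENNReal.ofReal (c p.1 p.2) ∂π₀ ≤ cost c κ η + ENNReal.ofReal ε := by
    by_cases htop : cost c κ η = ⊤
    · exact ⟨κ.prod η, ⟨inferInstance, by simp [Measure.map_fst_prod],
        by simp [Measure.map_snd_prod]⟩, by simp [htop]⟩
    · have hlt := ENNReal.lt_add_right htop hε'
      nth_rewrite 1 [cost] at hlt
      simp only [iInf_lt_iff] at hlt
      obtain ⟨π₀, hπ₀, h⟩ := hlt
      exact ⟨π₀, hπ₀, h.le⟩
  obtain ⟨π, hπ, hac, hcost⟩ := hC.exists_coupling_absolutelyContinuous hπ₀ hε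
  refine ⟨π, hπ, hac, hcost.trans ?_⟩
  calc _ ≤ cost c κ η + ENNReal.ofReal ε + 3 * ENNReal.ofReal ε := by gcongr
    _ = _ := by ring

/-- For Markov kernels `K`, `L` and any coupling `γ` of `μ`, `ν`,
`C_c(μK, νL) ≤ ∫ C_c(δ_x K, δ_y L) dγ(x,y)`, where `δ_x K = K x`. -/
theorem statement4 {c : X → X → ℝ} {B : ℝ} (hC : HypC c B)
    (K L : X → Measure X) (hK : IsMarkovKernelW c K) (hL : IsMarkovKernelW c L)
    (μ ν : Measure X) (hμ : IsProbabilityMeasure μ) (hν : IsProbabilityMeasure ν)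
    (γ : Measure (X × X)) (hγ : IsCoupling μ ν γ) :
    cost c (μ.bind K) (ν.bind L) ≤ ∫⁻ p, cost c (K p.1) (L p.2) ∂γ := by
  obtain ⟨hKm, hKp, -⟩ := hK
  obtain ⟨hLm, hLp, -⟩ := hL
  obtain ⟨hγp, hfst, hsnd⟩ := hγ
  refine ENNReal.le_of_forall_pos_le_add fun ε hε hfin => ?_
  have hε5 : (0 : ℝ) < ε / 5 := by positivity
  have hε5' : ENNReal.ofReal ((ε : ℝ) / 5) ≠ 0 := by simpa using hε5
  obtain ⟨g, hg, hgint, hS⟩ := exists_measurable_minorant _ hfin.ne hε5'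
  choose P hP hPac hPcost using fun p : X × X =>
    hC.exists_coupling_lintegral_le_cost (K p.1) (L p.2) hε5
  have hPprob : ∀ p, IsProbabilityMeasure (P p) := fun p => (hP p).1
  let KK : ProbabilityTheory.Kernel X X := ⟨K, hKm⟩
  let LL : ProbabilityTheory.Kernel X X := ⟨L, hLm⟩
  have : ProbabilityTheory.IsMarkovKernel KK := ⟨hKp⟩
  have : ProbabilityTheory.IsMarkovKernel LL := ⟨hLp⟩
  let Q : ProbabilityTheory.Kernel (X × X) (X × X) :=
    ProbabilityTheory.Kernel.prod (KK.comap Prod.fst measurable_fst)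
      (LL.comap Prod.snd measurable_snd)
  have hQ : ∀ p, Q p = (K p.1).prod (L p.2) := fun p =>
    ProbabilityTheory.Kernel.prod_apply _ _ p
  obtain ⟨ρ, hρ, hρle⟩ := exists_averaged_measure Q P (fun p => (hQ p).symm ▸ hPac p) hS
  have hset : ∀ (A : Set (X × X)), MeasurableSet A → ∀ h : X × X → ℝ≥0∞, Measurable h →
      (∀ p, P p A ≤ h p) → ρ A ≤ ∫⁻ p, h p ∂γ := by
    intro A hA h hh hle
    have hind : ∀ σ : Measure (X × X), ∫⁻ q,
        (SimpleFunc.piecewise A hA (SimpleFunc.const _ (1 : NNReal)) 0 q : ℝ≥0∞) ∂σ = σ A := by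
      intro σ
      rw [← lintegral_indicator_one hA]
      refine lintegral_congr fun q => ?_
      by_cases hq : q ∈ A <;> simp [hq]
    have := hρle (SimpleFunc.piecewise A hA (SimpleFunc.const _ (1 : NNReal)) 0) h hh
      fun p _ => by rw [hind]; exact hle p
    rwa [hind] at this
  have hbindK : IsProbabilityMeasure (μ.bind K) := isProbabilityMeasure_bind hKm.aemeasurable
    (ae_of_all _ hKp)
  have hbindL : IsProbabilityMeasure (ν.bind L) := isProbabilityMeasure_bind hLm.aemeasurable
    (ae_of_all _ hLp)
  have hρfst : ρ.map Prod.fst = μ.bind K := by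
    have := Measure.isProbabilityMeasure_map (μ := ρ) measurable_fst.aemeasurable (f := Prod.fst)
    refine Measure.eq_of_le_of_isProbabilityMeasure (Measure.le_iff.2 fun A hA => ?_)
    have hKA : Measurable fun x => K x A := Measure.measurable_measure.1 hKm A hA
    rw [Measure.map_apply measurable_fst hA, Measure.bind_apply hA hKm.aemeasurable, ← hfst,
      lintegral_map hKA measurable_fst]
    refine hset _ (measurable_fst hA) _ (hKA.comp measurable_fst) fun p => ?_
    rw [← Measure.map_apply measurable_fst hA, (hP p).2.1]
  have hρsnd : ρ.map Prod.snd = ν.bind L := by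
    have := Measure.isProbabilityMeasure_map (μ := ρ) measurable_snd.aemeasurable (f := Prod.snd)
    refine Measure.eq_of_le_of_isProbabilityMeasure (Measure.le_iff.2 fun A hA => ?_)
    have hLA : Measurable fun x => L x A := Measure.measurable_measure.1 hLm A hA
    rw [Measure.map_apply measurable_snd hA, Measure.bind_apply hA hLm.aemeasurable, ← hsnd,
      lintegral_map hLA measurable_snd]
    refine hset _ (measurable_snd hA) _ (hLA.comp measurable_snd) fun p => ?_
    rw [← Measure.map_apply measurable_snd hA, (hP p).2.2]
  refine (iInf₂_le ρ ⟨hρ, hρfst, hρsnd⟩).trans ?_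
  rw [lintegral_eq_nnreal]
  refine iSup₂_le fun s hs => ?_
  have hslin : (s.map ((↑) : NNReal → ℝ≥0∞)).lintegral ρ = ∫⁻ q, s q ∂ρ := by
    rw [← SimpleFunc.lintegral_eq_lintegral]
    rfl
  rw [hslin]
  refine (hρle s (fun p => g p + ε) (hg.add_const _) fun p hp => ?_).trans ?_
  · calc ∫⁻ q, s q ∂(P p) ≤ ∫⁻ q, ENNReal.ofReal (c q.1 q.2) ∂(P p) := lintegral_mono hs
      _ ≤ cost c (K p.1) (L p.2) + 4 * ENNReal.ofReal (ε / 5) := hPcost p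
      _ ≤ g p + ENNReal.ofReal (ε / 5) + 4 * ENNReal.ofReal (ε / 5) := by
          gcongr
          exact hp
      _ = g p + ENNReal.ofReal 5 * ENNReal.ofReal (ε / 5) := by
          rw [ENNReal.ofReal_ofNat]
          ring
      _ = g p + ε := by
          rw [← ENNReal.ofReal_mul (by norm_num), mul_div_cancel₀ _ (by norm_num),
            ENNReal.ofReal_coe_nnreal]
  · rw [lintegral_add_left hg, hgint]
    simp

end PoC
end

section
/- Let (Π,c) be a semimetric space satisfying Hypothesis (C) and let θ : Π × Π → [−∞,∞) be upper semicontinuous and satisfy θ(x,y) ≤ α₀ + β₀[c(z₀,x) + c(z₁,y)] for all x,y ∈ Π, for some z₀,z₁ ∈ Π and α₀,β₀ ≥ 0. Then for all x₀,y₀ ∈ Π: θ(x₀,y₀) = inf{ f(x₀) + g(y₀) : f,g ∈ C_{b,c}(Π) and θ(x,y) ≤ f(x) + g(y) for all x,y ∈ Π }. -/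
open MeasureTheory Filter Topology ENNReal

namespace PoC

variable {X : Type*} [MeasurableSpace X]

/-- Upper semicontinuity of `θ : X × X → [-∞,∞)` with respect to the product
semimetric topology, expressed sequentially. -/
def USCPair (c : X → X → ℝ) (θ : X → X → EReal) : Prop :=
  ∀ (u v : ℕ → X) (a b : X), CConv c u a → CConv c v b →
    Filter.limsup (fun n => θ (u n) (v n)) Filter.atTop ≤ θ a b

/-- An upper semicontinuous `θ` stays below `t` on a product of `c`-balls around any point
where it is below `t`. -/
lemma USCPair.exists_ball_lt {X : Type*} {c : X → X → ℝ} (hc : IsSemimetric c)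
    {θ : X → X → EReal} (husc : USCPair c θ) {a b : X} {t : EReal} (ht : θ a b < t) :
    ∃ δ > (0 : ℝ), ∀ x y, c x a < δ → c y b < δ → θ x y < t := by
  by_contra! h
  choose u v hu hv huv using fun n : ℕ => h (1 / ((n : ℝ) + 1)) Nat.one_div_pos_of_nat
  have hua : CConv c u a := squeeze_zero (fun n => hc.nonneg _ _) (fun n => (hu n).le)
    tendsto_one_div_add_atTop_nhds_zero_nat
  have hvb : CConv c v b := squeeze_zero (fun n => hc.nonneg _ _) (fun n => (hv n).le)
    tendsto_one_div_add_atTop_nhds_zero_nat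
  have hle : t ≤ limsup (fun n => θ (u n) (v n)) atTop :=
    le_limsup_of_frequently_le (Eventually.of_forall huv).frequently
  exact absurd (hle.trans (husc u v a b hua hvb)) ht.not_ge

/-- Affine functions of the semimetric to a fixed point belong to `C_{b,c}`. -/
lemma HypC.isCbc_affine {X : Type*} {c : X → X → ℝ} {B : ℝ} (hC : HypC c B) (s : ℝ) {K : ℝ}
    (hK : 0 ≤ K) (a : X) : IsCbc c (fun x => s + K * c a x) := by
  refine ⟨fun u l hu => ?_, |s|, K, abs_nonneg s, hK, a, fun x => ?_⟩
  · have ha : CConv c (fun _ => a) a := by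
      simp [CConv, (hC.semimetric.eq_zero_iff a a).2 rfl]
    exact ((hC.contC _ _ _ _ ha hu).const_mul K).const_add s
  · have h := mul_nonneg hK (hC.semimetric.nonneg a x)
    exact (abs_add_le _ _).trans_eq (by rw [abs_of_nonneg h])

/-- An upper semicontinuous `θ : X × X → [-∞,∞)` with
`θ(x,y) ≤ α₀ + β₀ [c(z₀,x) + c(z₁,y)]` is, at every point, the infimum of
`f(x₀) + g(y₀)` over pairs `f, g ∈ C_{b,c}(X)` with `θ ≤ f ⊕ g`. -/
theorem statement5 {c : X → X → ℝ} {B : ℝ} (hC : HypC c B)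
    (θ : X → X → EReal) (hne : ∀ x y, θ x y < ⊤) (husc : USCPair c θ)
    (z₀ z₁ : X) (α₀ β₀ : ℝ) (hα₀ : 0 ≤ α₀) (hβ₀ : 0 ≤ β₀)
    (hbd : ∀ x y, θ x y ≤ ((α₀ + β₀ * (c z₀ x + c z₁ y) : ℝ) : EReal)) :
    ∀ x₀ y₀ : X,
      θ x₀ y₀ = sInf { v : EReal | ∃ f g : X → ℝ, IsCbc c f ∧ IsCbc c g ∧
        (∀ x y, θ x y ≤ ((f x + g y : ℝ) : EReal)) ∧ v = ((f x₀ + g y₀ : ℝ) : EReal) } := by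
  intro x₀ y₀
  apply le_antisymm
  · refine le_sInf ?_
    rintro _ ⟨f, g, -, -, hfg, rfl⟩
    exact hfg x₀ y₀
  rw [← EReal.le_of_forall_lt_iff_le]
  intro t ht
  have hc := hC.semimetric
  obtain ⟨δ, hδ, hlt⟩ := husc.exists_ball_lt hc ht
  have hB : 0 ≤ B := zero_le_one.trans hC.one_le
  set A : ℝ := α₀ + β₀ * (B * (c z₀ x₀ + c z₁ y₀)) with hA
  set K : ℝ := β₀ * B + (|A| + |t|) / δ with hK
  have hK0 : 0 ≤ K := by positivity
  refine sInf_le ⟨fun x => t + K * c x₀ x, fun y => 0 + K * c y₀ y, hC.isCbc_affine t hK0 x₀,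
    hC.isCbc_affine 0 hK0 y₀, fun x y => ?_, ?_⟩
  · have hx := hc.nonneg x₀ x
    have hy := hc.nonneg y₀ y
    by_cases hnear : c x x₀ < δ ∧ c y y₀ < δ
    · refine (hlt x y hnear.1 hnear.2).le.trans (EReal.coe_le_coe_iff.2 ?_)
      have := mul_nonneg hK0 hx
      have := mul_nonneg hK0 hy
      linarith
    · refine (hbd x y).trans (EReal.coe_le_coe_iff.2 ?_)
      have hfar : δ ≤ c x₀ x + c y₀ y := by
        rw [hc.symm x, hc.symm y, not_and_or, not_lt, not_lt] at hnear
        rcases hnear with h | h <;> linarith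
      have hgrowth : β₀ * (c z₀ x + c z₁ y) ≤
          β₀ * (B * (c z₀ x₀ + c x₀ x) + B * (c z₁ y₀ + c y₀ y)) :=
        mul_le_mul_of_nonneg_left
          (add_le_add (hC.relaxed z₀ x x₀) (hC.relaxed z₁ y y₀)) hβ₀
      have hslope : |A| + |t| ≤ (|A| + |t|) / δ * (c x₀ x + c y₀ y) := by
        rw [div_mul_eq_mul_div, le_div_iff₀ hδ]
        exact mul_le_mul_of_nonneg_left hfar (by positivity)
      have hexpand : t + K * c x₀ x + (0 + K * c y₀ y) =
          t + β₀ * B * (c x₀ x + c y₀ y) + (|A| + |t|) / δ * (c x₀ x + c y₀ y) := by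
        rw [hK]; ring
      rw [hexpand]
      linarith [le_abs_self A, neg_abs_le t]
  · simp [(hc.eq_zero_iff _ _).2 rfl]

end PoC
end

section
/- Let F : [0,∞) → [0,∞) be continuous and let G : [0,∞) → ℝ be upper semicontinuous and bounded on every compact subinterval of [0,∞). Suppose the right-hand upper Dini derivative satisfies D⁺F(t) := limsup_{h↓0} (F(t+h) − F(t))/h ≤ G(t) for all t ≥ 0. Then F(t) − F(s) ≤ ∫_s^t G(τ) dτ for all 0 ≤ s ≤ t < ∞. -/
open MeasureTheory Filter Topology

namespace PoC

/-- A function that is upper semicontinuous on a measurable set is a.e. measurable there. -/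
theorem aemeasurable_restrict_of_upperSemicontinuousOn {G : ℝ → ℝ} {S : Set ℝ}
    (hS : MeasurableSet S) (hG : UpperSemicontinuousOn G S) (μ : Measure ℝ) :
    AEMeasurable G (μ.restrict S) := by
  rw [aemeasurable_restrict_iff_comap_subtype hS]
  exact (upperSemicontinuousOn_iff_restrict.2 hG).measurable.aemeasurable

/-- If the right-hand upper Dini derivative of a continuous function `g` is bounded on `[a, b)` by
an integrable function `φ`, then the increment of `g` is bounded by the integral of `φ`.
The bound is propagated from `a` to `b` for a lower semicontinuous majorant of `φ` with almost
the same integral. -/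
theorem sub_le_integral_of_eventually_slope_lt {g φ : ℝ → ℝ} {a b : ℝ} (hab : a ≤ b)
    (hcont : ContinuousOn g (Set.Icc a b))
    (hslope : ∀ x ∈ Set.Ico a b, ∀ r, φ x < r → ∀ᶠ u in 𝓝[>] x, slope g x u < r)
    (φint : IntegrableOn φ (Set.Icc a b)) :
    g b - g a ≤ ∫ y in a..b, φ y := by
  refine le_of_forall_pos_le_add fun ε εpos => ?_
  obtain ⟨H, φ_lt_H, H_lsc, H_int, H_lt_top, H_integral⟩ :=
    exists_lt_lowerSemicontinuous_integral_lt φ φint εpos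
  have hII : ∀ {c d : ℝ}, a ≤ c → c ≤ d → d ≤ b →
      IntervalIntegrable (fun u => (H u).toReal) volume c d := fun hc hcd hd =>
    (intervalIntegrable_iff_integrableOn_Icc_of_le hcd).2
      (IntegrableOn.mono_set H_int (Set.Icc_subset_Icc hc hd))
  have closed : IsClosed ({t | g t - g a ≤ ∫ u in a..t, (H u).toReal} ∩ Set.Icc a b) := by
    have : ContinuousOn (fun t => (g t - g a, ∫ u in a..t, (H u).toReal)) (Set.Icc a b) := by
      rw [← Set.uIcc_of_le hab] at H_int hcont ⊢
      exact (hcont.sub continuousOn_const).prodMk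
        (intervalIntegral.continuousOn_primitive_interval H_int)
    rw [Set.inter_comm]
    exact this.preimage_isClosed_of_isClosed isClosed_Icc OrderClosedTopology.isClosed_le'
  have main : Set.Icc a b ⊆ {t | g t - g a ≤ ∫ u in a..t, (H u).toReal} := by
    refine closed.Icc_subset_of_forall_exists_gt (by simp) fun t ht v t_lt_v => ?_
    obtain ⟨y, φ_lt_y, y_lt_H⟩ := EReal.lt_iff_exists_real_btwn.1 (φ_lt_H t)
    have y_le_H : ∀ᶠ u in 𝓝[>] t, (u - t) * y ≤ ∫ w in t..u, (H w).toReal := by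
      obtain ⟨m, M, ⟨hm, hM⟩, hmM⟩ :=
        mem_nhds_iff_exists_Ioo_subset.1 (H_lsc.lowerSemicontinuousAt t _ y_lt_H)
      filter_upwards [Ioo_mem_nhdsGT (lt_min hM ht.2.2)] with u hu
      have hub : u ≤ b := hu.2.le.trans (min_le_right _ _)
      rw [← smul_eq_mul, ← intervalIntegral.integral_const]
      refine intervalIntegral.integral_mono_ae_restrict hu.1.le intervalIntegrable_const
        (hII ht.2.1 hu.1.le hub) ?_
      filter_upwards [ae_mono (Measure.restrict_mono (Set.Icc_subset_Icc ht.2.1 hub) le_rfl)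
        H_lt_top, ae_restrict_mem measurableSet_Icc] with x Hx hx
      have hy : (y : EReal) < H x :=
        hmM ⟨hm.trans_le hx.1, (hx.2.trans_lt hu.2).trans_le (min_le_left _ _)⟩
      rw [← EReal.coe_le_coe_iff, EReal.coe_toReal Hx.ne (φ_lt_H x).ne_bot]
      exact hy.le
    have increment_le : ∀ᶠ u in 𝓝[>] t, g u - g t ≤ (u - t) * y := by
      filter_upwards [hslope t ht.2 y (EReal.coe_lt_coe_iff.1 φ_lt_y), self_mem_nhdsWithin]
        with u hu t_lt_u
      have := mul_le_mul_of_nonneg_left hu.le (sub_pos.2 (Set.mem_Ioi.1 t_lt_u)).le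
      rwa [← smul_eq_mul, sub_smul_slope] at this
    obtain ⟨x, hxH, hxg, hx⟩ := (y_le_H.and (increment_le.and
      (Ioc_mem_nhdsGT (lt_min t_lt_v ht.2.2)))).exists
    refine ⟨x, ?_, hx.1, hx.2.trans (min_le_left _ _)⟩
    have hadd := intervalIntegral.integral_add_adjacent_intervals
      (hII le_rfl ht.2.1 ht.2.2.le) (hII ht.2.1 hx.1.le (hx.2.trans (min_le_right _ _)))
    have hta : g t - g a ≤ ∫ u in a..t, (H u).toReal := ht.1
    change g x - g a ≤ ∫ u in a..x, (H u).toReal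
    linarith
  have hb : g b - g a ≤ ∫ u in a..b, (H u).toReal := main (Set.right_mem_Icc.2 hab)
  rw [intervalIntegral.integral_of_le hab, ← integral_Icc_eq_integral_Ioc] at hb ⊢
  exact hb.trans H_integral.le

/-- If `F : [0,∞) → [0,∞)` is continuous, `G : [0,∞) → ℝ` is upper
semicontinuous and bounded on compact subintervals, and the right-hand upper Dini
derivative of `F` is bounded by `G` on `[0,∞)`, then `F t - F s ≤ ∫_s^t G`. -/
theorem statement6 (F G : ℝ → ℝ)
    (hFnonneg : ∀ t : ℝ, 0 ≤ t → 0 ≤ F t)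
    (hFcont : ContinuousOn F (Set.Ici (0 : ℝ)))
    (hGusc : UpperSemicontinuousOn G (Set.Ici (0 : ℝ)))
    (hGbdd : ∀ a b : ℝ, 0 ≤ a → ∃ M : ℝ, ∀ t ∈ Set.Icc a b, |G t| ≤ M)
    -- `D⁺F(t) = limsup_{h↓0} (F(t+h) - F(t))/h ≤ G(t)` for all `t ≥ 0`:
    (hDini : ∀ t : ℝ, 0 ≤ t → ∀ ε > (0 : ℝ), ∃ δ > (0 : ℝ), ∀ h : ℝ, 0 < h → h < δ →
      (F (t + h) - F t) / h ≤ G t + ε) :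
    ∀ s t : ℝ, 0 ≤ s → s ≤ t → F t - F s ≤ ∫ τ in s..t, G τ := by
  intro s t hs hst
  have hsub : Set.Icc s t ⊆ Set.Ici 0 := fun x hx => hs.trans hx.1
  refine sub_le_integral_of_eventually_slope_lt hst (hFcont.mono hsub) ?_ ?_
  · intro x hx r hr
    obtain ⟨δ, hδ, hquot⟩ := hDini x (hs.trans hx.1) ((r - G x) / 2) (by linarith)
    filter_upwards [Ioo_mem_nhdsGT (lt_add_of_pos_right x hδ)] with u hu
    have := hquot (u - x) (by linarith [hu.1]) (by linarith [hu.2])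
    rw [add_sub_cancel] at this
    rw [slope_def_field]
    linarith
  · obtain ⟨M, hM⟩ := hGbdd s t hs
    exact Integrable.of_bound
      (aemeasurable_restrict_of_upperSemicontinuousOn measurableSet_Icc
        (hGusc.mono hsub) volume).aestronglyMeasurable M
      ((ae_restrict_mem measurableSet_Icc).mono fun x hx => hM x hx)

end PoC
end

section
/- Let (Π,c) be a semimetric space satisfying Hypothesis (C) and let (κ_t)_{t≥0} be a Feller semigroup on Π. Suppose there exist z ∈ Π, α, β ≥ 0 and a continuous function ρ : [0,∞) → [0,∞) with ρ(t) → 0 as t ↓ 0 such that ∫_Π c(x,y) dκ_t(x)(y) ≤ ρ(t)·[α + β·c(z,x)] for all t ≥ 0 and x ∈ Π. Then the semigroup is c-continuous: for every μ ∈ P_c(Π), one has μκ_t ∈ P_c(Π) for all t ≥ 0 and the map t ↦ μκ_t is continuous with respect to C_c. -/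
open MeasureTheory Filter Topology ENNReal

namespace PoC

variable {X : Type*}

/-- A `c`-sequentially compact subset of `X`. -/
def SeqCompactC (c : X → X → ℝ) (K : Set X) : Prop :=
  ∀ u : ℕ → X, (∀ n, u n ∈ K) → ∃ l ∈ K, ∃ φ : ℕ → ℕ, StrictMono φ ∧ CConv c (u ∘ φ) l

/-- `φ ∈ C₀(X)`: continuous and vanishing at infinity (w.r.t. the `c`-topology). -/
def IsC0 (c : X → X → ℝ) (φ : X → ℝ) : Prop :=
  SeqContinuous c φ ∧
    ∀ ε > (0 : ℝ), ∃ K : Set X, SeqCompactC c K ∧ ∀ x ∉ K, |φ x| < ε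

/-- `φ ∈ C₀~(X)`: continuous with a constant limit at infinity,
i.e. `φ - a ∈ C₀(X)` for some constant `a`. -/
def IsC0sim (c : X → X → ℝ) (φ : X → ℝ) : Prop :=
  ∃ a : ℝ, IsC0 c (fun x => φ x - a)

end PoC

namespace PoC

variable {X : Type*} [MeasurableSpace X]

/-- A Feller (probability) semigroup on `X`, given by its transition kernels `κ_t`. -/
structure FellerSG (c : X → X → ℝ) (κ : ℝ → X → Measure X) : Prop where
  kernel : ∀ t : ℝ, 0 ≤ t → IsMarkovKernelW c (κ t)
  init : ∀ x : X, κ 0 x = Measure.dirac x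
  chapman : ∀ t : ℝ, 0 ≤ t → ∀ s : ℝ, 0 ≤ s → ∀ x : X,
    κ (t + s) x = (κ t x).bind (κ s)
  mapsC0 : ∀ t : ℝ, 0 ≤ t → ∀ φ : X → ℝ, IsC0 c φ →
    IsC0 c (fun x => ∫ y, φ y ∂(κ t x))
  strongCont : ∀ φ : X → ℝ, IsC0 c φ → ∀ ε > (0 : ℝ), ∃ δ > (0 : ℝ),
    ∀ t : ℝ, 0 < t → t < δ → ∀ x : X, |(∫ y, φ y ∂(κ t x)) - φ x| ≤ ε

/-- The Feller semigroup `κ` is `c`-continuous: it preserves `P_c(X)` and the Markov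
flows `t ↦ μ κ_t` are continuous in the Wasserstein-`c` topology. -/
def CContSG (c : X → X → ℝ) (κ : ℝ → X → Measure X) : Prop :=
  ∀ μ : Measure X, MemPc c μ →
    (∀ t : ℝ, 0 ≤ t → MemPc c (μ.bind (κ t))) ∧
    ∀ t : ℝ, 0 ≤ t →
      Filter.Tendsto (fun s => cost c (μ.bind (κ s)) (μ.bind (κ t)))
        (nhdsWithin t (Set.Ici (0 : ℝ))) (nhds 0)

/-- `φ` belongs to the domain of the generator of `κ` with value `ψ = Aφ`:
the difference quotients `(κ_tφ - φ)/t` converge to `ψ` uniformly as `t ↓ 0`. -/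
def InGen (c : X → X → ℝ) (κ : ℝ → X → Measure X) (φ ψ : X → ℝ) : Prop :=
  IsC0 c φ ∧ IsC0 c ψ ∧
    ∀ ε > (0 : ℝ), ∃ δ > (0 : ℝ), ∀ t : ℝ, 0 < t → t < δ → ∀ x : X,
      |((∫ y, φ y ∂(κ t x)) - φ x) / t - ψ x| ≤ ε

/-- The Dini derivative `ω_c(μ,ν;A,B)` of the transport cost between the Markov flows
generated by the semigroups `κ` and `lam`, valued in `EReal`. -/
noncomputable def omegaC (c : X → X → ℝ) (κ lam : ℝ → X → Measure X)
    (μ ν : Measure X) : EReal :=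
  Filter.limsup
    (fun t : ℝ =>
      ((((cost c (μ.bind (κ t)) (ν.bind (lam t))).toReal - (cost c μ ν).toReal) / t : ℝ) :
        EReal))
    (nhdsWithin (0 : ℝ) (Set.Ioi (0 : ℝ)))

end PoC

namespace PoC

section LowerIntegral

variable {X Y : Type*} [MeasurableSpace X] [MeasurableSpace Y]

/-- Tonelli's inequality for the measure `μ.bind K`; no measurability of `f` is needed. -/
theorem lintegral_bind_le (μ : Measure X) {K : X → Measure Y} (hK : Measurable K)
    (f : Y → ℝ≥0∞) :
    ∫⁻ y, f y ∂(μ.bind K) ≤ ∫⁻ x, ∫⁻ y, f y ∂(K x) ∂μ := by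
  obtain ⟨g, hg, hgf, heq⟩ := exists_measurable_le_lintegral_eq (μ.bind K) f
  rw [heq, Measure.lintegral_bind hK.aemeasurable hg.aemeasurable]
  exact lintegral_mono fun x => lintegral_mono hgf

/-- Tonelli's inequality for `μ ⊗ₘ K`; no measurability of `f` is needed. -/
theorem lintegral_compProd_le (μ : Measure X) [SFinite μ] (K : ProbabilityTheory.Kernel X Y)
    [ProbabilityTheory.IsSFiniteKernel K] (f : X × Y → ℝ≥0∞) :
    ∫⁻ p, f p ∂(μ.compProd K) ≤ ∫⁻ x, ∫⁻ y, f (x, y) ∂(K x) ∂μ := by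
  obtain ⟨g, hg, hgf, heq⟩ := exists_measurable_le_lintegral_eq (μ.compProd K) f
  rw [heq, Measure.lintegral_compProd hg]
  exact lintegral_mono fun x => lintegral_mono fun y => hgf (x, y)

/-- Affine functions of an arbitrary function integrate as expected against a probability
measure. -/
theorem lintegral_const_add_const_mul (μ : Measure X) [IsProbabilityMeasure μ]
    (a : ℝ≥0∞) {b : ℝ≥0∞} (hb : b ≠ ⊤) (f : X → ℝ≥0∞) :
    ∫⁻ x, (a + b * f x) ∂μ = a + b * ∫⁻ x, f x ∂μ := by
  rw [lintegral_add_left measurable_const, lintegral_const, measure_univ, mul_one,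
    lintegral_const_mul' _ _ hb]

theorem isProbabilityMeasure_bind (μ : Measure X) [IsProbabilityMeasure μ]
    {K : X → Measure Y} (hK : Measurable K) (hprob : ∀ x, IsProbabilityMeasure (K x)) :
    IsProbabilityMeasure (μ.bind K) := by
  constructor
  rw [Measure.bind_apply MeasurableSet.univ hK.aemeasurable]
  simp

end LowerIntegral

section Transport

variable {X : Type*} [MeasurableSpace X] {c : X → X → ℝ}

theorem cost_le_of_isCoupling {μ ν : Measure X} {γ : Measure (X × X)}
    (hγ : IsCoupling μ ν γ) :
    cost c μ ν ≤ ∫⁻ p, ENNReal.ofReal (c p.1 p.2) ∂γ :=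
  iInf₂_le γ hγ

theorem cost_le_cost_swap (hc : IsSemimetric c) (μ ν : Measure X) :
    cost c μ ν ≤ cost c ν μ := by
  refine le_iInf₂ fun γ hγ => ?_
  obtain ⟨hprob, hfst, hsnd⟩ := hγ
  have hcoup : IsCoupling μ ν (γ.map (MeasurableEquiv.prodComm : X × X ≃ᵐ X × X)) := by
    refine ⟨Measure.isProbabilityMeasure_map (MeasurableEquiv.measurable _).aemeasurable, ?_, ?_⟩
    · rw [Measure.map_map measurable_fst (MeasurableEquiv.measurable _), ← hsnd]
      rfl
    · rw [Measure.map_map measurable_snd (MeasurableEquiv.measurable _), ← hfst]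
      rfl
  refine (cost_le_of_isCoupling hcoup).trans_eq ?_
  rw [lintegral_map_equiv]
  exact lintegral_congr fun p => by rw [hc.symm]; rfl

/-- Moving mass from `μ` along a Markov kernel costs at most the mean displacement. -/
theorem cost_bind_le (μ : Measure X) [IsProbabilityMeasure μ] {K : X → Measure X}
    (hK : Measurable K) (hprob : ∀ x, IsProbabilityMeasure (K x)) :
    cost c μ (μ.bind K) ≤ ∫⁻ x, ∫⁻ y, ENNReal.ofReal (c x y) ∂(K x) ∂μ := by
  let k : ProbabilityTheory.Kernel X X := ⟨K, hK⟩
  have : ProbabilityTheory.IsMarkovKernel k := ⟨hprob⟩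
  have hcoup : IsCoupling μ (μ.bind K) (μ.compProd k) :=
    ⟨inferInstance, Measure.fst_compProd μ k, Measure.snd_compProd μ k⟩
  exact (cost_le_of_isCoupling hcoup).trans (lintegral_compProd_le μ k _)

end Transport

theorem HypC.ofReal_relaxed {X : Type*} {c : X → X → ℝ} {B : ℝ} (hC : HypC c B)
    (x y w : X) :
    ENNReal.ofReal (c x y) ≤ ENNReal.ofReal B * ENNReal.ofReal (c x w)
      + ENNReal.ofReal B * ENNReal.ofReal (c w y) := by
  have hB : 0 ≤ B := zero_le_one.trans hC.one_le
  rw [← mul_add, ← ENNReal.ofReal_add (hC.semimetric.nonneg _ _) (hC.semimetric.nonneg _ _),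
    ← ENNReal.ofReal_mul hB]
  exact ENNReal.ofReal_le_ofReal (hC.relaxed x y w)

section Semigroup

variable {X : Type*} [MeasurableSpace X] {c : X → X → ℝ} {B : ℝ} {κ : ℝ → X → Measure X}
  {z : X} {α β : ℝ} {ρ : ℝ → ℝ}

theorem FellerSG.bind_add (hκ : FellerSG c κ) (μ : Measure X) {t s : ℝ} (ht : 0 ≤ t)
    (hs : 0 ≤ s) : μ.bind (κ (t + s)) = (μ.bind (κ t)).bind (κ s) := by
  rw [Measure.bind_bind (hκ.kernel t ht).1.aemeasurable (hκ.kernel s hs).1.aemeasurable]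
  congr 1
  exact funext fun x => hκ.chapman t ht s hs x

theorem FellerSG.isProbabilityMeasure_bind (hκ : FellerSG c κ) (μ : Measure X)
    [IsProbabilityMeasure μ] {t : ℝ} (ht : 0 ≤ t) : IsProbabilityMeasure (μ.bind (κ t)) :=
  PoC.isProbabilityMeasure_bind μ (hκ.kernel t ht).1 (hκ.kernel t ht).2.1

/-- The mean displacement of `μ` under `κ t`, in terms of the `c`-moment of `μ`. -/
theorem lintegral_displacement_le (hC : HypC c B) (hα : 0 ≤ α) (hβ : 0 ≤ β) {t : ℝ}
    (hρt : 0 ≤ ρ t)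
    (hbound : ∀ x : X,
      (∫⁻ y, ENNReal.ofReal (c x y) ∂(κ t x)) ≤ ENNReal.ofReal (ρ t * (α + β * c z x)))
    (μ : Measure X) [IsProbabilityMeasure μ] :
    ∫⁻ x, ∫⁻ y, ENNReal.ofReal (c x y) ∂(κ t x) ∂μ ≤ ENNReal.ofReal (ρ t) *
      (ENNReal.ofReal α + ENNReal.ofReal β * ∫⁻ x, ENNReal.ofReal (c z x) ∂μ) := by
  rw [← lintegral_const_add_const_mul μ _ ENNReal.ofReal_ne_top,
    ← lintegral_const_mul' _ _ ENNReal.ofReal_ne_top]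
  refine lintegral_mono fun x => (hbound x).trans_eq ?_
  have hc := hC.semimetric.nonneg z x
  rw [ENNReal.ofReal_mul hρt, ENNReal.ofReal_add hα (mul_nonneg hβ hc), ENNReal.ofReal_mul hβ]

/-- The `c`-moment of `μ κ_t` around `z`. -/
theorem lintegral_moment_bind_le (hC : HypC c B) (hκ : FellerSG c κ) (hα : 0 ≤ α)
    (hβ : 0 ≤ β) {t : ℝ} (ht : 0 ≤ t) (hρt : 0 ≤ ρ t)
    (hbound : ∀ x : X,
      (∫⁻ y, ENNReal.ofReal (c x y) ∂(κ t x)) ≤ ENNReal.ofReal (ρ t * (α + β * c z x)))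
    (μ : Measure X) [IsProbabilityMeasure μ] :
    ∫⁻ y, ENNReal.ofReal (c z y) ∂(μ.bind (κ t)) ≤
      ENNReal.ofReal B * (ENNReal.ofReal (ρ t) * ENNReal.ofReal α) +
        (ENNReal.ofReal B + ENNReal.ofReal B * (ENNReal.ofReal (ρ t) * ENNReal.ofReal β)) *
          ∫⁻ x, ENNReal.ofReal (c z x) ∂μ := by
  rw [← lintegral_const_add_const_mul μ _ (by finiteness)]
  refine (lintegral_bind_le μ (hκ.kernel t ht).1 _).trans (lintegral_mono fun x => ?_)
  have := (hκ.kernel t ht).2.1 x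
  have hc := hC.semimetric.nonneg z x
  calc ∫⁻ y, ENNReal.ofReal (c z y) ∂(κ t x)
      ≤ ∫⁻ y, (ENNReal.ofReal B * ENNReal.ofReal (c z x)
          + ENNReal.ofReal B * ENNReal.ofReal (c x y)) ∂(κ t x) :=
        lintegral_mono fun y => hC.ofReal_relaxed z y x
    _ = ENNReal.ofReal B * ENNReal.ofReal (c z x)
          + ENNReal.ofReal B * ∫⁻ y, ENNReal.ofReal (c x y) ∂(κ t x) :=
        lintegral_const_add_const_mul _ _ ENNReal.ofReal_ne_top _
    _ ≤ ENNReal.ofReal B * ENNReal.ofReal (c z x)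
          + ENNReal.ofReal B * ENNReal.ofReal (ρ t * (α + β * c z x)) := by
        gcongr
        exact hbound x
    _ = _ := by
        rw [ENNReal.ofReal_mul hρt, ENNReal.ofReal_add hα (mul_nonneg hβ hc),
          ENNReal.ofReal_mul hβ]
        ring

/-- Finiteness of the `c`-moment around one point gives it around every point. -/
theorem HypC.memPc_of_moment (hC : HypC c B) {μ : Measure X} [IsProbabilityMeasure μ]
    (hμ : ∫⁻ x, ENNReal.ofReal (c z x) ∂μ < ⊤) : MemPc c μ := by
  refine ⟨inferInstance, fun w => ?_⟩
  refine (lintegral_mono fun x => hC.ofReal_relaxed w x z).trans_lt ?_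
  rw [lintegral_const_add_const_mul μ _ ENNReal.ofReal_ne_top]
  finiteness

end Semigroup

/-- A Feller semigroup satisfying the moment bound
`∫ c(x,y) κ_t(x,dy) ≤ ρ(t)[α + β c(z,x)]` is `c`-continuous. -/
theorem statement8 {X : Type*} [MeasurableSpace X] {c : X → X → ℝ} {B : ℝ}
    (hC : HypC c B) (κ : ℝ → X → Measure X) (hκ : FellerSG c κ)
    (z : X) (α β : ℝ) (hα : 0 ≤ α) (hβ : 0 ≤ β)
    (ρ : ℝ → ℝ) (hρnonneg : ∀ t : ℝ, 0 ≤ t → 0 ≤ ρ t)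
    (hρcont : ContinuousOn ρ (Set.Ici (0 : ℝ)))
    (hρlim : Filter.Tendsto ρ (nhdsWithin (0 : ℝ) (Set.Ioi (0 : ℝ))) (nhds 0))
    (hbound : ∀ t : ℝ, 0 ≤ t → ∀ x : X,
      (∫⁻ y, ENNReal.ofReal (c x y) ∂(κ t x)) ≤ ENNReal.ofReal (ρ t * (α + β * c z x))) :
    CContSG c κ := by
  intro μ hμ
  have hμprob := hμ.1
  have hm := hμ.2 z
  have hmoment := fun (t : ℝ) (ht : 0 ≤ t) =>
    lintegral_moment_bind_le hC hκ hα hβ ht (hρnonneg t ht) (hbound t ht) μ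
  refine ⟨fun t ht => ?_, fun t ht => ?_⟩
  · have := hκ.isProbabilityMeasure_bind μ ht
    exact hC.memPc_of_moment ((hmoment t ht).trans_lt (by finiteness))
  obtain ⟨R, hR⟩ := isCompact_Icc.exists_bound_of_continuousOn
    (hρcont.mono (Set.Icc_subset_Ici_self : Set.Icc 0 t ⊆ Set.Ici 0))
  obtain ⟨M, hMtop, hM⟩ : ∃ M : ℝ≥0∞, M ≠ ⊤ ∧ ∀ r ∈ Set.Icc 0 t,
      ENNReal.ofReal α + ENNReal.ofReal β *
        ∫⁻ y, ENNReal.ofReal (c z y) ∂(μ.bind (κ r)) ≤ M := by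
    refine ⟨ENNReal.ofReal α + ENNReal.ofReal β *
      (ENNReal.ofReal B * (ENNReal.ofReal R * ENNReal.ofReal α) +
        (ENNReal.ofReal B + ENNReal.ofReal B * (ENNReal.ofReal R * ENNReal.ofReal β)) *
          ∫⁻ x, ENNReal.ofReal (c z x) ∂μ), by finiteness, fun r hr => ?_⟩
    have hρR : ρ r ≤ R := (le_abs_self _).trans (hR r hr)
    grw [hmoment r hr.1, hρR]
  have hstep : ∀ r ∈ Set.Icc 0 t, ∀ h, 0 ≤ h →
      cost c (μ.bind (κ r)) (μ.bind (κ (r + h))) ≤ ENNReal.ofReal (ρ h) * M := by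
    intro r hr h hh
    have := hκ.isProbabilityMeasure_bind μ hr.1
    rw [hκ.bind_add μ hr.1 hh]
    refine (cost_bind_le _ (hκ.kernel h hh).1 (hκ.kernel h hh).2.1).trans ?_
    refine (lintegral_displacement_le hC hα hβ (hρnonneg h hh) (hbound h hh) _).trans ?_
    gcongr
    exact hM r hr
  have hle : ∀ s ∈ Set.Ici (0 : ℝ),
      cost c (μ.bind (κ s)) (μ.bind (κ t)) ≤ ENNReal.ofReal (ρ |s - t|) * M := by
    intro s hs
    rcases le_total s t with hst | hts
    · have := hstep s ⟨hs, hst⟩ (t - s) (sub_nonneg.2 hst)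
      rwa [add_sub_cancel, ← abs_of_nonneg (sub_nonneg.2 hst), abs_sub_comm] at this
    · have := hstep t ⟨ht, le_rfl⟩ (s - t) (sub_nonneg.2 hts)
      rw [add_sub_cancel] at this
      rw [abs_of_nonneg (sub_nonneg.2 hts)]
      exact (cost_le_cost_swap hC.semimetric _ _).trans this
  have hρ0 : ρ 0 = 0 := tendsto_nhds_unique
    ((hρcont 0 Set.self_mem_Ici).mono Set.Ioi_subset_Ici_self) hρlim
  have hdist : Tendsto (fun s => |s - t|) (𝓝[Set.Ici 0] t) (𝓝[Set.Ici 0] 0) := by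
    refine tendsto_nhdsWithin_iff.2 ⟨?_, Eventually.of_forall fun s => Set.mem_Ici.2 (abs_nonneg _)⟩
    have hcont : Continuous fun s : ℝ => |s - t| := by fun_prop
    simpa using (hcont.tendsto t).mono_left nhdsWithin_le_nhds
  have hρdist : Tendsto (fun s => ENNReal.ofReal (ρ |s - t|) * M) (𝓝[Set.Ici 0] t) (𝓝 0) := by
    have h := ENNReal.Tendsto.mul_const
      (ENNReal.tendsto_ofReal (Tendsto.comp (hρcont 0 Set.self_mem_Ici) hdist))
      (Or.inr hMtop)
    simpa [hρ0] using h
  exact tendsto_of_tendsto_of_tendsto_of_le_of_le' tendsto_const_nhds hρdist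
    (Eventually.of_forall fun _ => zero_le) (eventually_nhdsWithin_of_forall hle)

end PoC
end

section
/- Let (Π,c) be a semimetric space satisfying Hypothesis (C), let N ∈ ℕ with N ≥ 2, and let Ξ : Π × P_c(Π) × P_c(Π) → [0,∞) satisfy: (i) Ξ(x,μ,ν) = Ξ(x,ν,μ) and Ξ(x,μ,μ) = 0 for all x, μ, ν; (ii) there exists B' > 1 such that Ξ(x,μ,ν) ≤ B'[c(x,y) + C_c(μ,μ̃) + Ξ(y,μ̃,ν)] for all x,y ∈ Π and μ,ν,μ̃ ∈ P_c(Π); (iii) (x,μ,ν) ↦ Ξ(x,μ,ν) is continuous with respect to the product of the c-topology on Π and the C_c-topologies on P_c(Π). Fix ρ ∈ P_c(Π) and z ∈ Π^N, and define F₁ : Π^N → [0,∞) by F₁(x) = Ξ(x₁, (1/(N−1)) Σ_{k=2}^N δ_{x_k}, ρ). Then there exist constants M₀, M₁ ≥ 0 such that F₁(x) ≤ M₀ + M₁ c_N(z,x) for all x ∈ Π^N, where c_N(z,x) = (1/N) Σ_{k=1}^N c(z_k,x_k); in particular F₁ ∈ C_{b,c_N}(Π^N). -/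
open MeasureTheory Filter Topology ENNReal

namespace PoC

section WeightedDirac

variable {X ι : Type*} [MeasurableSpace X]

/-- One direction of `lintegral_dirac`, valid without any measurability. -/
lemma lintegral_dirac_le (a : X) (f : X → ℝ≥0∞) : ∫⁻ x, f x ∂(Measure.dirac a) ≤ f a := by
  rw [← iSup_lintegral_measurable_le_eq_lintegral]
  refine iSup₂_le fun g hg => iSup_le fun hgf => ?_
  rw [lintegral_dirac' a hg]
  exact hgf a

lemma lintegral_smul_sum_dirac_le (w : ℝ≥0∞) (S : Finset ι) (x : ι → X) (f : X → ℝ≥0∞) :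
    ∫⁻ y, f y ∂(w • ∑ k ∈ S, Measure.dirac (x k)) ≤ w * ∑ k ∈ S, f (x k) := by
  rw [lintegral_smul_measure, lintegral_finsetSum_measure, smul_eq_mul]
  gcongr
  exact lintegral_dirac_le _ _

lemma isProbabilityMeasure_smul_sum_dirac {w : ℝ≥0∞} {S : Finset ι} (hw : w * S.card = 1)
    (x : ι → X) : IsProbabilityMeasure (w • ∑ k ∈ S, Measure.dirac (x k)) :=
  ⟨by simpa using hw⟩

lemma map_smul_sum_dirac {Y : Type*} [MeasurableSpace Y] {f : X → Y} (hf : Measurable f)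
    (w : ℝ≥0∞) (S : Finset ι) (x : ι → X) :
    (w • ∑ k ∈ S, Measure.dirac (x k)).map f = w • ∑ k ∈ S, Measure.dirac (f (x k)) := by
  rw [Measure.map_smul, Measure.map_finset_sum hf.aemeasurable]
  simp only [Measure.map_dirac' hf]

lemma memPc_smul_sum_dirac (c : X → X → ℝ) {w : ℝ≥0∞} {S : Finset ι} (hw : w * S.card = 1)
    (hw' : w ≠ ⊤) (x : ι → X) : MemPc c (w • ∑ k ∈ S, Measure.dirac (x k)) := by
  refine ⟨isProbabilityMeasure_smul_sum_dirac hw x, fun z => ?_⟩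
  refine (lintegral_smul_sum_dirac_le w S x _).trans_lt (ENNReal.mul_lt_top hw'.lt_top ?_)
  exact ENNReal.sum_lt_top.2 fun k _ => ENNReal.ofReal_lt_top

/-- Matching atoms with the same index bounds the transport cost. -/
lemma cost_smul_sum_dirac_le (c : X → X → ℝ) {w : ℝ≥0∞} {S : Finset ι} (hw : w * S.card = 1)
    (x y : ι → X) :
    cost c (w • ∑ k ∈ S, Measure.dirac (x k)) (w • ∑ k ∈ S, Measure.dirac (y k))
      ≤ w * ∑ k ∈ S, ENNReal.ofReal (c (x k) (y k)) := by
  refine (iInf₂_le (w • ∑ k ∈ S, Measure.dirac (x k, y k)) ⟨?_, ?_, ?_⟩).trans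
    (lintegral_smul_sum_dirac_le w S (fun k => (x k, y k)) _)
  · exact isProbabilityMeasure_smul_sum_dirac hw _
  · exact map_smul_sum_dirac measurable_fst w S _
  · exact map_smul_sum_dirac measurable_snd w S _

lemma cost_self {c : X → X → ℝ} (hc : ∀ x, c x x = 0) (μ : Measure X) [IsProbabilityMeasure μ] :
    cost c μ μ = 0 := by
  have hd : Measurable fun x : X => (x, x) := measurable_id.prodMk measurable_id
  have hγ : IsCoupling μ μ (μ.map fun x => (x, x)) := by
    refine ⟨Measure.isProbabilityMeasure_map hd.aemeasurable, ?_, ?_⟩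
    · rw [Measure.map_map measurable_fst hd]
      exact Measure.map_id
    · rw [Measure.map_map measurable_snd hd]
      exact Measure.map_id
  refine le_antisymm ((iInf₂_le _ hγ).trans ((lintegral_map_le _ _).trans ?_)) zero_le
  simp [hc]

end WeightedDirac

end PoC

namespace PoC

/-- For `Ξ` as in Hypothesis (A, Ξ), `ρ ∈ P_c(X)` and `z ∈ X^N`,
the function `F₁(x) = Ξ(x₁, (1/(N-1)) Σ_{k≥2} δ_{x_k}, ρ)` satisfies
`F₁(x) ≤ M₀ + M₁ c_N(z,x)`; in particular `F₁ ∈ C_{b,c_N}(X^N)`. -/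
theorem statement18 {X : Type*} [MeasurableSpace X] {c : X → X → ℝ} {B : ℝ}
    (hC : HypC c B) {N : ℕ} (hN : 2 ≤ N)
    (Ξ : X → Measure X → Measure X → ℝ)
    (hΞnonneg : ∀ x μ ν, 0 ≤ Ξ x μ ν)
    -- (i) symmetry and vanishing on the diagonal:
    (hΞsymm : ∀ x : X, ∀ μ ν : Measure X, MemPc c μ → MemPc c ν → Ξ x μ ν = Ξ x ν μ)
    (hΞdiag : ∀ x : X, ∀ μ : Measure X, MemPc c μ → Ξ x μ μ = 0)
    -- (ii) the relaxed triangle-type inequality with constant `B' > 1`: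
    (B' : ℝ) (hB' : 1 < B')
    (hΞtri : ∀ x y : X, ∀ μ ν μ' : Measure X, MemPc c μ → MemPc c ν → MemPc c μ' →
      Ξ x μ ν ≤ B' * (c x y + (cost c μ μ').toReal + Ξ y μ' ν))
    -- (iii) continuity w.r.t. the product of the `c`- and `C_c`-topologies:
    (hΞcont : ∀ (u : ℕ → X) (x : X) (μs νs : ℕ → Measure X) (μ ν : Measure X),
      (∀ n, MemPc c (μs n)) → (∀ n, MemPc c (νs n)) → MemPc c μ → MemPc c ν →
      CConv c u x →
      Filter.Tendsto (fun n => cost c (μs n) μ) Filter.atTop (nhds 0) →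
      Filter.Tendsto (fun n => cost c (νs n) ν) Filter.atTop (nhds 0) →
      Filter.Tendsto (fun n => Ξ (u n) (μs n) (νs n)) Filter.atTop (nhds (Ξ x μ ν)))
    (ρ : Measure X) (hρ : MemPc c ρ) (z : Fin N → X) :
    (∃ M₀ M₁ : ℝ, 0 ≤ M₀ ∧ 0 ≤ M₁ ∧
      ∀ x : Fin N → X,
        Ξ (x ⟨0, by omega⟩)
            (((N : ℝ≥0∞) - 1)⁻¹ •
              ∑ k ∈ Finset.univ.erase (⟨0, by omega⟩ : Fin N), Measure.dirac (x k)) ρ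
          ≤ M₀ + M₁ * ((N : ℝ)⁻¹ * ∑ k : Fin N, c (z k) (x k))) ∧
    -- in particular `F₁` is `c_N`-sequentially continuous (membership in `C_{b,c_N}`):
    SeqContinuous (fun x y : Fin N → X => (N : ℝ)⁻¹ * ∑ k : Fin N, c (x k) (y k))
      (fun x : Fin N → X =>
        Ξ (x ⟨0, by omega⟩)
          (((N : ℝ≥0∞) - 1)⁻¹ •
            ∑ k ∈ Finset.univ.erase (⟨0, by omega⟩ : Fin N), Measure.dirac (x k)) ρ) := by
  have hS : (((N : ℝ≥0∞) - 1)⁻¹) *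
      ((Finset.univ.erase (⟨0, by omega⟩ : Fin N)).card : ℝ≥0∞) = 1 := by
    rw [Finset.card_erase_of_mem (Finset.mem_univ _), Finset.card_univ, Fintype.card_fin,
      ENNReal.natCast_sub, Nat.cast_one]
    refine ENNReal.inv_mul_cancel ?_ (by finiteness)
    exact (tsub_pos_of_lt (by exact_mod_cast hN)).ne'
  have hw : ((N : ℝ≥0∞) - 1)⁻¹ ≤ 1 := by
    rw [ENNReal.inv_le_one]
    exact ENNReal.le_sub_of_add_le_right ENNReal.one_ne_top
      (by rw [one_add_one_eq_two]; exact_mod_cast hN)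
  have hw' : ((N : ℝ≥0∞) - 1)⁻¹ ≠ ⊤ := ne_top_of_le_ne_top ENNReal.one_ne_top hw
  have hN0 : (N : ℝ) ≠ 0 := by
    have : N ≠ 0 := by omega
    exact_mod_cast this
  have hnn := hC.semimetric.nonneg
  have hcost (x y : Fin N → X) :
      cost c
        (((N : ℝ≥0∞) - 1)⁻¹ •
          ∑ k ∈ Finset.univ.erase (⟨0, by omega⟩ : Fin N), Measure.dirac (x k))
        (((N : ℝ≥0∞) - 1)⁻¹ •
          ∑ k ∈ Finset.univ.erase (⟨0, by omega⟩ : Fin N), Measure.dirac (y k))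
      ≤ ENNReal.ofReal
          (∑ k ∈ Finset.univ.erase (⟨0, by omega⟩ : Fin N), c (x k) (y k)) := by
    rw [ENNReal.ofReal_sum_of_nonneg fun k _ => hnn _ _]
    exact (cost_smul_sum_dirac_le c hS x y).trans (mul_le_of_le_one_left' hw)
  have hmem (x : Fin N → X) := memPc_smul_sum_dirac c hS hw' x
  refine ⟨⟨B' * Ξ (z ⟨0, by omega⟩)
      (((N : ℝ≥0∞) - 1)⁻¹ •
        ∑ k ∈ Finset.univ.erase (⟨0, by omega⟩ : Fin N), Measure.dirac (z k)) ρ,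
      B' * N, mul_nonneg (by linarith) (hΞnonneg _ _ _), by positivity, fun x => ?_⟩, ?_⟩
  · refine (hΞtri _ (z ⟨0, by omega⟩) _ ρ _ (hmem x) hρ (hmem z)).trans ?_
    have hreal := ENNReal.toReal_le_of_le_ofReal
      (Finset.sum_nonneg fun k _ => hnn _ _) (hcost x z)
    have hsplit := Finset.add_sum_erase Finset.univ (fun k => c (x k) (z k))
      (Finset.mem_univ (⟨0, by omega⟩ : Fin N))
    rw [mul_assoc, mul_inv_cancel_left₀ hN0, ← mul_add]
    refine mul_le_mul_of_nonneg_left ?_ (by linarith)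
    simp only [hC.semimetric.symm (z _)]
    linarith
  · intro u l hul
    have hsum : Tendsto (fun n => ∑ k, c (u n k) (l k)) atTop (𝓝 0) := by
      simpa [mul_inv_cancel_left₀ hN0] using Tendsto.const_mul (N : ℝ) hul
    have := hρ.1
    refine hΞcont _ _ _ (fun _ => ρ) _ ρ (fun n => hmem (u n)) (fun _ => hρ) (hmem l) hρ
      ?_ ?_ ?_
    · exact squeeze_zero (fun n => hnn _ _)
        (fun n => Finset.single_le_sum (f := fun k => c (u n k) (l k))
          (fun k _ => hnn _ _) (Finset.mem_univ _)) hsum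
    · have hlim : Tendsto (fun n => ENNReal.ofReal (∑ k, c (u n k) (l k))) atTop (𝓝 0) := by
        simpa using ENNReal.tendsto_ofReal hsum
      refine tendsto_of_tendsto_of_tendsto_of_le_of_le tendsto_const_nhds hlim
        (fun _ => zero_le) fun n => (hcost (u n) l).trans (ENNReal.ofReal_le_ofReal ?_)
      exact Finset.sum_le_sum_of_subset_of_nonneg (Finset.erase_subset _ _)
        fun k _ _ => hnn _ _
    · simp [cost_self (fun x => (hC.semimetric.eq_zero_iff x x).2 rfl) ρ]

end PoC
end
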